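/- Let K be any field and let G = ⟨(1,2,3,4,5,6,7,8)⟩ ⊆ S_8 be the cyclic group of order 8 generated by an 8-cycle. Then the fixed field K(x_1,…,x_8)^G is K-rational if and only if char(K) = 2, or char(K) ≠ 2 and the Galois group Gal(K(ζ_8)/K) is cyclic, where ζ_8 is a primitive 8th root of unity in an algebraic closure of K. -/

import Mathlib

noncomputable section

/-- The rational function field `K(x_i : i ∈ I)` over `K`, realized as the fraction field
of the multivariate polynomial ring. -/
abbrev RFF (K : Type) [Field K] (I : Type) := FractionRing (MvPolynomial I K)

/-- The image of the variable `x_i` in the rational function field `K(x_i : i ∈ I)`. -/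
noncomputable def Xvar (K : Type) [Field K] (I : Type) (i : I) : RFF K I :=
  algebraMap (MvPolynomial I K) (RFF K I) (MvPolynomial.X i)

/-- Permutations of the variables as `K`-algebra automorphisms of the polynomial ring. -/
def renameHom (K : Type) [Field K] (I : Type) :
    Equiv.Perm I →* (MvPolynomial I K ≃ₐ[K] MvPolynomial I K) where
  toFun σ := MvPolynomial.renameEquiv K σ
  map_one' := MvPolynomial.renameEquiv_refl K
  map_mul' σ τ := (MvPolynomial.renameEquiv_trans K τ σ).symm

/-- The action of permutations of the variables on `K(x_i : i ∈ I)` by `K`-automorphisms,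
determined by `σ(x_i) = x_{σ(i)}`. -/
noncomputable def permHom (K : Type) [Field K] (I : Type) :
    Equiv.Perm I →* (RFF K I ≃ₐ[K] RFF K I) :=
  (IsFractionRing.fieldEquivOfAlgEquivHom K (RFF K I)).comp (renameHom K I)

/-- The fixed field `K(x_i : i ∈ I)^G` of a group `G` of permutations of the variables. -/
noncomputable def fixedSub (K : Type) [Field K] (I : Type) (G : Subgroup (Equiv.Perm I)) :
    IntermediateField K (RFF K I) :=
  IntermediateField.fixedField (G.map (permHom K I))

/-- An extension `L/K` is `K`-rational if it is purely transcendental over `K`, i.e. generated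
by finitely many algebraically independent elements. -/
def IsRatExt (K : Type) [Field K] (L : Type*) [Field L] [Algebra K L] : Prop :=
  ∃ (n : ℕ) (t : Fin n → L), AlgebraicIndependent K t ∧
    IntermediateField.adjoin K (Set.range t) = ⊤

/-!
Let `L = K(ζ₈)`. The Lagrange resolvents `y₀, …, y₇` diagonalise the 8-cycle over `L`, and the
automorphism `ζ₈ ↦ ζ₈ᵏ` permutes them by `yⱼ ↦ yₖⱼ`. By Galois descent the fixed field over `K` is
rational if and only if the fixed field over `L` has algebraically independent generators that are
invariant under `Gal(L/K)`; it suffices to find generators with a Galois-stable `L`-span. When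
`Gal(L/K)` is generated by `ζ₈ ↦ ζ₈ᵏ`, such generators are Laurent monomials in the `yⱼ`, apart from
`k = 7`, where `y₄ / (y₁⁴ + y₇⁴)` and `(y₁⁴ - y₇⁴) / (y₁⁴ + y₇⁴)` are also needed.

Otherwise `Gal(L/K)` contains `τ₃ : ζ₈ ↦ ζ₈³` and `τ₇ : ζ₈ ↦ ζ₈⁷`. If `t` were invariant generators,
then `b = y₁⁸` would be an element of `L(t)` with `τ₃ b ≡ b³` and `τ₇ b ≡ b⁷` modulo 8th powers, and
unique factorization in `L[t]` would give `b = a · w · τ₃ w · q²` with `a ∈ L` and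
`τ₇ w ∈ L w`. Dividing `w` by `y₁⁴ / q` yields `w'` that the cycle negates, with `w' · τ₃ w'`
constant and `τ₇ w' ∈ L w'`. The denominator of `w'` as a fraction of polynomials in the `xᵢ` is
then an eigenvector of the cycle, whose eigenvalue `u` is an 8th root of unity with `τ₃ u = -u` and
`τ₇ u = u`; there is none.

In characteristic `p` a `pᵏ`-cycle is unipotent, so it acts triangularly on a suitable basis of the
linear forms, and Miyata's theorem applies.
-/

open IntermediateField

theorem adjoin_coe_span {K E : Type*} [Field K] [Field E] [Algebra K E] (s : Set E) :
    adjoin K (Submodule.span K s : Set E) = adjoin K s := by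
  refine le_antisymm (adjoin_le_iff.2 ?_) (adjoin.mono K _ _ Submodule.subset_span)
  exact (Submodule.span_le (p := (adjoin K s).toSubalgebra.toSubmodule)).2 (subset_adjoin K s)

theorem pow_natCard_eq_one_of_isCycleOn_univ {I : Type*} [Finite I] {g : Equiv.Perm I}
    (hg : g.IsCycleOn Set.univ) : g ^ Nat.card I = 1 := by
  have := Fintype.ofFinite I
  ext i
  rw [Nat.card_eq_fintype_card, ← Finset.card_univ, Equiv.Perm.one_apply,
    Equiv.Perm.IsCycleOn.pow_card_apply (by simpa using hg) (Finset.mem_univ i)]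

section FixedSub

variable {K I : Type} [Field K] {G : Subgroup (Equiv.Perm I)}

theorem permHom_algebraMap (g : Equiv.Perm I) (p : MvPolynomial I K) :
    permHom K I g (algebraMap _ (RFF K I) p) =
      algebraMap _ (RFF K I) (MvPolynomial.rename g p) := by
  simp [permHom, renameHom, IsFractionRing.fieldEquivOfAlgEquivHom_apply]

@[simp]
theorem permHom_Xvar (g : Equiv.Perm I) (i : I) : permHom K I g (Xvar K I i) = Xvar K I (g i) := by
  simp [Xvar, permHom_algebraMap]

theorem mem_fixedSub {f : RFF K I} : f ∈ fixedSub K I G ↔ ∀ g ∈ G, permHom K I g f = f := by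
  simp [fixedSub, mem_fixedField_iff]

theorem mem_fixedSub_zpowers {g : Equiv.Perm I} {f : RFF K I} :
    f ∈ fixedSub K I (Subgroup.zpowers g) ↔ permHom K I g f = f := by
  rw [mem_fixedSub]
  refine ⟨fun h ↦ h g (Subgroup.mem_zpowers g), fun h ↦ ?_⟩
  change Subgroup.zpowers g ≤ (MulAction.stabilizer _ f).comap (permHom K I)
  exact (Subgroup.zpowers_le).2 h

theorem algebraicIndependent_Xvar : AlgebraicIndependent K (Xvar K I) :=
  (MvPolynomial.algebraicIndependent_X I K).map'
    (f := IsScalarTower.toAlgHom K (MvPolynomial I K) (RFF K I)) (IsFractionRing.injective _ _)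

theorem aeval_Xvar (p : MvPolynomial I K) :
    MvPolynomial.aeval (Xvar K I) p = algebraMap _ (RFF K I) p := by
  exact (MvPolynomial.aeval_algebraMap_apply _ _ p).trans (by rw [MvPolynomial.aeval_X_left_apply])

theorem adjoin_range_Xvar : adjoin K (Set.range (Xvar K I)) = ⊤ := by
  have h (p : MvPolynomial I K) :
      algebraMap _ (RFF K I) p ∈ adjoin K (Set.range (Xvar K I)) := by
    refine algebra_adjoin_le_adjoin K _ ?_
    rw [Algebra.adjoin_range_eq_range_aeval]
    exact ⟨p, aeval_Xvar p⟩
  refine eq_top_iff.2 fun f _ ↦ ?_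
  obtain ⟨p, q, -, rfl⟩ := IsFractionRing.div_surjective (A := MvPolynomial I K) f
  exact div_mem (h p) (h q)

theorem algebraicIndependent_of_isAlgebraic_adjoin {ι : Type} [Finite ι]
    (hι : Cardinal.mk ι ≤ Cardinal.mk I) {t : ι → RFF K I}
    (ht : Algebra.IsAlgebraic (adjoin K (Set.range t)) (RFF K I)) : AlgebraicIndependent K t := by
  have := isAlgebraic_adjoin_iff_top.1 ht
  exact (Algebra.IsAlgebraic.isTranscendenceBasis_of_le_trdeg_of_finite K t
    (hι.trans algebraicIndependent_Xvar.cardinalMk_le_trdeg)).1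

theorem algebraicIndependent_of_adjoin_eq_top {ι : Type} [Finite ι]
    (hι : Cardinal.mk ι ≤ Cardinal.mk I) {t : ι → RFF K I} (ht : adjoin K (Set.range t) = ⊤) :
    AlgebraicIndependent K t :=
  algebraicIndependent_of_isAlgebraic_adjoin hι <| ht ▸
    ⟨fun f ↦ isAlgebraic_algebraMap (⟨f, trivial⟩ : (⊤ : IntermediateField K (RFF K I)))⟩

instance [Finite I] : Finite (G.map (permHom K I)) :=
  ((Set.toFinite (G : Set (Equiv.Perm I))).image _).to_subtype

theorem algebraicIndependent_of_adjoin_eq_fixedSub [Finite I] {ι : Type} [Finite ι]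
    (hι : Cardinal.mk ι ≤ Cardinal.mk I) {t : ι → RFF K I}
    (ht : adjoin K (Set.range t) = fixedSub K I G) : AlgebraicIndependent K t := by
  refine algebraicIndependent_of_isAlgebraic_adjoin hι (ht ▸ ?_)
  exact ⟨fun f ↦ (FixedPoints.isIntegral (G.map (permHom K I)) (RFF K I) f).isAlgebraic⟩

end FixedSub

theorem isRatExt_iff_exists_adjoin_eq {K : Type} {E : Type*} [Field K] [Field E] [Algebra K E]
    (F : IntermediateField K E) :
    IsRatExt K F ↔ ∃ (n : ℕ) (t : Fin n → E),
      AlgebraicIndependent K t ∧ adjoin K (Set.range t) = F := by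
  have key {n : ℕ} (t : Fin n → F) : adjoin K (Set.range (F.val ∘ t)) = F ↔
      adjoin K (Set.range t) = ⊤ := by
    rw [Set.range_comp, ← lift_inj, lift_adjoin, lift_top, coe_val]
  constructor
  · rintro ⟨n, t, ht, htop⟩
    exact ⟨n, F.val ∘ t, ht.map' F.val.injective, (key t).2 htop⟩
  · rintro ⟨n, t, ht, htF⟩
    lift t to Fin n → F using fun i ↦ htF ▸ subset_adjoin K _ ⟨i, rfl⟩
    exact ⟨n, t, .of_comp F.val ht, (key t).1 htF⟩

section Miyata

open Polynomial

theorem div_mem_of_smul_eq {H E S S' : Type*} [Group H] [Finite H] [Field E]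
    [MulSemiringAction H E] [SetLike S E] [SubmonoidClass S E] [SetLike S' E] [SubfieldClass S' E]
    {R : S} {T : S'} (hR : ∀ h : H, ∀ a ∈ R, h • a ∈ R)
    (hT : ∀ a ∈ R, (∀ h : H, h • a = a) → a ∈ T) {a b : E} (ha : a ∈ R) (hb : b ∈ R)
    (hab : ∀ h : H, h • (a / b) = a / b) : a / b ∈ T := by
  classical
  have := Fintype.ofFinite H
  rcases eq_or_ne b 0 with rfl | hb0
  · rw [div_zero]; exact zero_mem T
  set N := ∏ h : H, h • b with hNdef
  have hN0 : N ≠ 0 := Finset.prod_ne_zero_iff.2 fun h _ ↦ (smul_ne_zero_iff_ne h).2 hb0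
  have hN (h : H) : h • N = N := by
    simp_rw [N, Finset.smul_prod', ← mul_smul]
    exact Fintype.prod_equiv (Equiv.mulLeft h) _ _ fun _ ↦ rfl
  have habN : a / b * N ∈ R := by
    rw [hNdef, ← Finset.mul_prod_erase _ _ (Finset.mem_univ (1 : H)), one_smul, ← mul_assoc,
      div_mul_cancel₀ _ hb0]
    exact mul_mem ha (prod_mem fun h _ ↦ hR h b hb)
  rw [← mul_div_cancel_right₀ (a / b) hN0]
  exact div_mem (hT _ habN fun h ↦ by rw [smul_mul', hab, hN])
    (hT _ (prod_mem fun h _ ↦ hR h b hb) hN)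

theorem map_div_eq_and_map_mod_eq {A : Type*} [Field A] {φ : A[X] →+* A[X]}
    (hφ : ∀ q, (φ q).degree = q.degree) {p q : A[X]} (hp : φ p = p) (hp0 : p ≠ 0) (hq : φ q = q) :
    φ (q / p) = q / p ∧ φ (q % p) = q % p := by
  have hdiff : φ (q % p) - q % p = p * (q / p - φ (q / p)) := by
    have h := congrArg φ (EuclideanDomain.div_add_mod q p)
    rw [map_add, map_mul, hp, hq] at h
    linear_combination h - EuclideanDomain.div_add_mod q p
  have hmod : φ (q % p) - q % p = 0 := by
    refine eq_zero_of_dvd_of_degree_lt ⟨_, hdiff⟩ ((degree_sub_le _ _).trans_lt ?_)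
    rw [hφ, max_self]
    exact degree_mod_lt q hp0
  refine ⟨?_, sub_eq_zero.1 hmod⟩
  rw [hmod] at hdiff
  exact (sub_eq_zero.1 ((mul_eq_zero.1 hdiff.symm).resolve_left hp0)).symm

section FixedPolynomials

variable {A ι : Type*} [Field A] {φ : ι → A[X] →+* A[X]}

theorem mem_closure_of_map_eq {p : A[X]} (hφ : ∀ i q, (φ i q).degree = q.degree)
    (hp : ∀ i, φ i p = p) (hp0 : 0 < p.degree)
    (hmin : ∀ q, (∀ i, φ i q = q) → 0 < q.degree → p.degree ≤ q.degree) (q : A[X])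
    (hq : ∀ i, φ i q = q) :
    q ∈ Subring.closure (insert p {r | (∀ i, φ i r = r) ∧ r.degree ≤ 0}) := by
  have hpne : p ≠ 0 := ne_zero_of_degree_gt hp0
  induction hn : q.degree using WellFoundedLT.induction generalizing q with
  | _ n ih =>
    subst hn
    by_cases hq0 : q.degree ≤ 0
    · exact Subring.subset_closure (.inr ⟨hq, hq0⟩)
    have hdm i := map_div_eq_and_map_mod_eq (hφ i) (hp i) hpne (hq i)
    have hmod : (q % p).degree ≤ 0 := not_lt.1 fun h ↦
      (degree_mod_lt q hpne).not_ge (hmin _ (fun i ↦ (hdm i).2) h)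
    rw [← EuclideanDomain.div_add_mod q p]
    refine add_mem (mul_mem (Subring.subset_closure (.inl rfl)) ?_)
      (Subring.subset_closure (.inr ⟨fun i ↦ (hdm i).2, hmod⟩))
    exact ih _ (degree_div_lt (ne_zero_of_degree_gt (not_le.1 hq0)) hp0) _ (fun i ↦ (hdm i).1) rfl

theorem exists_mem_closure_of_map_eq (hφ : ∀ i q, (φ i q).degree = q.degree) :
    ∃ p, (∀ i, φ i p = p) ∧ ∀ q, (∀ i, φ i q = q) →
      q ∈ Subring.closure (insert p {r | (∀ i, φ i r = r) ∧ r.degree ≤ 0}) := by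
  by_cases hex : ∃ q, (∀ i, φ i q = q) ∧ 0 < q.degree
  · obtain ⟨p, ⟨hp, hp0⟩, hmin⟩ := exists_minimalFor_of_wellFoundedLT _ degree hex
    refine ⟨p, hp, mem_closure_of_map_eq hφ hp hp0 fun q hq hq0 ↦ ?_⟩
    exact (le_total p.degree q.degree).elim id (hmin ⟨hq, hq0⟩)
  · push Not at hex
    exact ⟨0, fun i ↦ map_zero _, fun q hq ↦ Subring.subset_closure (.inr ⟨hq, hex q hq⟩)⟩

end FixedPolynomials

variable {K E : Type*} [Field K] [Field E] [Algebra K E] {A : IntermediateField K E} {y : E}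

theorem exists_aeval_eq_apply_aeval {σ : E ≃ₐ[K] E} (hA : ∀ a ∈ A, σ a ∈ A)
    (hy : ∃ α ∈ A, ∃ β ∈ A, α ≠ 0 ∧ σ y = α * y + β) :
    ∃ φ : A[X] →+* A[X], ∀ q, (φ q).degree = q.degree ∧ aeval y (φ q) = σ (aeval y q) := by
  obtain ⟨α, hα, β, hβ, hα0, hy⟩ := hy
  let s : A →+* A := (σ : E →+* E).restrict A A hA
  have hlin : (C (⟨α, hα⟩ : A) * X + C (⟨β, hβ⟩ : A) : A[X]).degree = 1 :=
    degree_linear fun h ↦ hα0 (congrArg Subtype.val h :)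
  refine ⟨(compRingHom (C ⟨α, hα⟩ * X + C ⟨β, hβ⟩)).comp (mapRingHom s), fun q ↦ ⟨?_, ?_⟩⟩
  · rw [RingHom.comp_apply, coe_compRingHom_apply, degree_comp (by simp [hlin]), hlin,
      coe_mapRingHom, degree_map, mul_one]
  · induction q using Polynomial.induction_on' with
    | add p q hp hq => rw [map_add, map_add, hp, hq, map_add, map_add]
    | monomial n a =>
      have hs : ((s a : A) : E) = σ a := rfl
      simp [aeval_monomial, hy, hs]

theorem exists_adjoin_simple_inf_fixedField_eq {H : Subgroup (E ≃ₐ[K] E)} [Finite H]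
    (hA : ∀ σ ∈ H, ∀ a ∈ A, σ a ∈ A) (hy : Transcendental A y)
    (hσy : ∀ σ ∈ H, ∃ α ∈ A, ∃ β ∈ A, α ≠ 0 ∧ σ y = α * y + β) :
    ∃ p, (adjoin A {y}).restrictScalars K ⊓ fixedField H = (A ⊓ fixedField H) ⊔ K⟮p⟯ := by
  choose φ hdeg hφ using fun σ : H ↦ exists_aeval_eq_apply_aeval (hA σ σ.2) (hσy σ σ.2)
  have hinj : Function.Injective (aeval (R := A) y) := transcendental_iff_injective.1 hy
  have hfix (q : A[X]) : aeval y q ∈ fixedField H ↔ ∀ σ : H, φ σ q = q := by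
    simp [mem_fixedField_iff, ← hinj.eq_iff, hφ]
  have hmem (q : A[X]) : aeval y q ∈ (adjoin A {y}).restrictScalars K :=
    algebra_adjoin_le_adjoin A _ (by simp [Algebra.adjoin_singleton_eq_range_aeval])
  obtain ⟨p, hp, hall⟩ := exists_mem_closure_of_map_eq hdeg
  set T := (A ⊓ fixedField H) ⊔ K⟮aeval y p⟯
  have hpoly (q : A[X]) (hq : ∀ σ : H, φ σ q = q) : aeval y q ∈ T := by
    suffices h : Subring.closure (insert p {r | (∀ σ, φ σ r = r) ∧ r.degree ≤ 0}) ≤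
        T.toSubfield.toSubring.comap (aeval y : A[X] →ₐ[A] E).toRingHom from h (hall q hq)
    refine Subring.closure_le.2 (Set.insert_subset ?_ fun r ⟨hr, hr0⟩ ↦ ?_)
    · exact (le_sup_right : _ ≤ T) (mem_adjoin_simple_self K _)
    · refine (le_sup_left : _ ≤ T) ⟨?_, (hfix r).2 hr⟩
      rw [eq_C_of_degree_le_zero hr0]
      simp
  refine ⟨aeval y p, le_antisymm ?_ ?_⟩
  · rintro f ⟨hfA, hfH⟩
    rw [SetLike.mem_coe, mem_restrictScalars, mem_adjoin_simple_iff] at hfA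
    obtain ⟨r, d, rfl⟩ := hfA
    refine div_mem_of_smul_eq (H := H) (R := (aeval (R := A) y).range) ?_ ?_
      (AlgHom.mem_range_self _ r) (AlgHom.mem_range_self _ d) hfH
    · rintro σ _ ⟨q, rfl⟩
      exact ⟨φ σ q, hφ σ q⟩
    · rintro _ ⟨q, rfl⟩ hq
      exact hpoly q ((hfix q).1 hq)
  · have hA : A ≤ (adjoin A {y}).restrictScalars K := fun a ha ↦ algebraMap_mem _ (⟨a, ha⟩ : A)
    refine sup_le (inf_le_inf_right _ hA) (adjoin_simple_le_iff.2 ⟨hmem p, (hfix p).2 hp⟩)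

theorem exists_adjoin_range_eq_inf_fixedField {H : Subgroup (E ≃ₐ[K] E)} [Finite H] {n : ℕ}
    {z : Fin n → E} (hz : AlgebraicIndependent K z)
    (hσz : ∀ σ ∈ H, ∀ i, ∃ α ∈ adjoin K (z '' Set.Iio i), ∃ β ∈ adjoin K (z '' Set.Iio i),
      α ≠ 0 ∧ σ (z i) = α * z i + β) :
    ∃ p : Fin n → E, adjoin K (Set.range p) = adjoin K (Set.range z) ⊓ fixedField H := by
  induction n with
  | zero => exact ⟨z, by simp [Set.range_eq_empty]⟩
  | succ n ih =>
    have hIio (i : Fin n) : z '' Set.Iio i.castSucc = (z ∘ Fin.castSucc) '' Set.Iio i := by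
      rw [Set.image_comp, Fin.image_castSucc_Iio]
    have hlast : z '' Set.Iio (Fin.last n) = Set.range (z ∘ Fin.castSucc) := by
      rw [Set.range_comp, Fin.range_castSucc]; rfl
    have hrange : Set.range z = insert (z (Fin.last n)) (Set.range (z ∘ Fin.castSucc)) := by
      conv_lhs => rw [← Fin.snoc_init_self z, Fin.range_snoc]
      rfl
    obtain ⟨p, hp⟩ := ih (hz.comp _ (Fin.castSucc_injective n)) fun σ hσ i ↦
      hIio i ▸ hσz σ hσ i.castSucc
    have hA : ∀ σ ∈ H, ∀ a ∈ adjoin K (Set.range (z ∘ Fin.castSucc)),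
        σ a ∈ adjoin K (Set.range (z ∘ Fin.castSucc)) := by
      intro σ hσ
      change adjoin K _ ≤ (adjoin K _).comap (σ : E →ₐ[K] E)
      refine adjoin_le_iff.2 ?_
      rintro _ ⟨i, rfl⟩
      obtain ⟨α, hα, β, hβ, -, h⟩ := hσz σ hσ i.castSucc
      have hle := hIio i ▸ adjoin.mono K _ _ (Set.image_subset_range (z ∘ Fin.castSucc) _)
      suffices h' : σ (z i.castSucc) ∈ adjoin K (Set.range (z ∘ Fin.castSucc)) from h'
      rw [h]
      exact add_mem (mul_mem (hle hα) (subset_adjoin K _ ⟨i, rfl⟩)) (hle hβ)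
    have htr : Transcendental (adjoin K (Set.range (z ∘ Fin.castSucc))) (z (Fin.last n)) := by
      rw [← hlast, transcendental_adjoin_iff]
      exact hz.transcendental_adjoin (by simp)
    obtain ⟨q, hq⟩ := exists_adjoin_simple_inf_fixedField_eq hA htr fun σ hσ ↦
      hlast ▸ hσz σ hσ (Fin.last n)
    refine ⟨Fin.snoc p q, ?_⟩
    rw [hrange, Fin.range_snoc, Set.insert_eq, Set.union_comm, adjoin_union, hp, ← hq,
      adjoin_adjoin_left, Set.union_comm]
    rfl

theorem isRatExt_fixedSub_of_triangular {K I : Type} [Field K] [Finite I]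
    {G : Subgroup (Equiv.Perm I)} {n : ℕ} (hn : n ≤ Nat.card I) {z : Fin n → RFF K I}
    (hz : adjoin K (Set.range z) = ⊤)
    (hGz : ∀ g ∈ G, ∀ i, ∃ α ∈ adjoin K (z '' Set.Iio i), ∃ β ∈ adjoin K (z '' Set.Iio i),
      α ≠ 0 ∧ permHom K I g (z i) = α * z i + β) :
    IsRatExt K (fixedSub K I G) := by
  have hcard : Cardinal.mk (Fin n) ≤ Cardinal.mk I := by
    rw [Cardinal.mk_fin, ← Nat.cast_card]
    exact_mod_cast hn
  obtain ⟨p, hp⟩ := exists_adjoin_range_eq_inf_fixedField (H := G.map (permHom K I))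
    (algebraicIndependent_of_adjoin_eq_top hcard hz) (by rintro _ ⟨g, hg, rfl⟩; exact hGz g hg)
  rw [hz, top_inf_eq] at hp
  exact (isRatExt_iff_exists_adjoin_eq _).2
    ⟨n, p, algebraicIndependent_of_adjoin_eq_fixedSub hcard hp, hp⟩

end Miyata

section CharP

theorem one_add_pow_apply_sub_mem_span {K V : Type*} [Field K] [AddCommGroup V] [Module K V]
    {N : Module.End K V} {n : ℕ} (hN : N ^ n = 0) (x : V) (m : ℕ) (i : Fin n) :
    ((1 + N) ^ m) ((N ^ (i.rev : ℕ)) x) - (N ^ (i.rev : ℕ)) x ∈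
      Submodule.span K ((fun j : Fin n ↦ (N ^ (j.rev : ℕ)) x) '' Set.Iio i) := by
  induction m generalizing i with
  | zero => simp
  | succ m ih =>
    have hsplit : ((1 + N) ^ (m + 1)) ((N ^ (i.rev : ℕ)) x) - (N ^ (i.rev : ℕ)) x =
        (((1 + N) ^ m) ((N ^ (i.rev : ℕ)) x) - (N ^ (i.rev : ℕ)) x) +
          ((1 + N) ^ m) ((N ^ (i.rev + 1 : ℕ)) x) := by
      simp only [pow_succ (1 + N), pow_succ' N, Module.End.mul_apply, LinearMap.add_apply,
        Module.End.one_apply, map_add]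
      abel
    rw [hsplit]
    refine add_mem (ih i) ?_
    rcases Nat.eq_zero_or_pos (i : ℕ) with hi | hi
    · have hrev : (i.rev : ℕ) + 1 = n := by rw [Fin.val_rev]; omega
      rw [hrev, hN, LinearMap.zero_apply, map_zero]
      exact zero_mem _
    · let j : Fin n := ⟨i - 1, by omega⟩
      have hj : j < i := Fin.lt_def.2 (by simp only [j]; omega)
      have hrev : (i.rev : ℕ) + 1 = j.rev := by simp only [Fin.val_rev, j]; omega
      rw [hrev, ← sub_add_cancel (((1 + N) ^ m) _) ((N ^ (j.rev : ℕ)) x)]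
      exact add_mem (Submodule.span_mono (Set.image_mono (Set.Iio_subset_Iio hj.le)) (ih j))
        (Submodule.subset_span ⟨j, hj, rfl⟩)

variable {K I : Type} [Field K]

theorem isRatExt_fixedSub_zpowers_of_charP [Finite I] {p : ℕ} [Fact p.Prime] [CharP K p]
    {g : Equiv.Perm I} (hg : g.IsCycleOn Set.univ) {k : ℕ} (hI : Nat.card I = p ^ k) :
    IsRatExt K (fixedSub K I (Subgroup.zpowers g)) := by
  have : CharP (Module.End K (RFF K I)) p := charP_of_injective_algebraMap
    (algebraMap K (Module.End K (RFF K I))).injective p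
  let T : Module.End K (RFF K I) := (permHom K I g).toLinearMap
  have hT (m : ℕ) (f : RFF K I) : (T ^ m) f = permHom K I (g ^ m) f := by
    rw [map_pow, Module.End.pow_apply, AlgEquiv.coe_pow]
    rfl
  have hcycle (i j : I) : ∃ m : ℕ, (g ^ m) i = j :=
    hg.exists_pow_eq' Set.finite_univ trivial trivial
  have hgpow : g ^ p ^ k = 1 := hI ▸ pow_natCard_eq_one_of_isCycleOn_univ hg
  have hN : (T - 1) ^ (p ^ k) = 0 := by
    rw [sub_pow_char_pow_of_commute _ _ (Commute.one_right T), one_pow, sub_eq_zero]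
    ext f
    simp [hT, hgpow]
  obtain ⟨i₀⟩ : Nonempty I := (Nat.card_pos_iff.1 (hI ▸ pow_pos (Fact.out : p.Prime).pos k)).1
  set z : Fin (p ^ k) → RFF K I := fun i ↦ ((T - 1) ^ (i.rev : ℕ)) (Xvar K I i₀) with hzdef
  have hz m i : permHom K I (g ^ m) (z i) - z i ∈ adjoin K (z '' Set.Iio i) := by
    have h := one_add_pow_apply_sub_mem_span hN (Xvar K I i₀) m i
    rw [add_sub_cancel, hT, ← hzdef] at h
    exact adjoin_coe_span (K := K) (z '' Set.Iio i) ▸ subset_adjoin K _ h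
  refine isRatExt_fixedSub_of_triangular hI.ge (z := z) ?_ fun g' hg' i ↦ ?_
  · have : NeZero (p ^ k) := ⟨pow_ne_zero k (Fact.out : p.Prime).ne_zero⟩
    rw [← top_le_iff, ← adjoin_range_Xvar, adjoin_le_iff]
    rintro _ ⟨i, rfl⟩
    obtain ⟨m, rfl⟩ := hcycle i₀ i
    have hlast : z (0 : Fin (p ^ k)).rev = Xvar K I i₀ := by
      simp only [z, Fin.rev_rev, Fin.val_zero, pow_zero, Module.End.one_apply]
    have h := add_mem (adjoin.mono K _ _ (Set.image_subset_range z _) (hz m (0 : Fin (p ^ k)).rev))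
      (subset_adjoin K _ ⟨(0 : Fin (p ^ k)).rev, rfl⟩)
    rwa [sub_add_cancel, hlast, permHom_Xvar] at h
  · obtain ⟨m, rfl⟩ := (isOfFinOrder_of_finite g).mem_powers_iff_mem_zpowers.2 hg'
    exact ⟨1, one_mem _, _, hz m i, one_ne_zero, by simp⟩

end CharP

section Substitution

variable {K ι : Type} {E : Type*} [Field K] [Field E] [Algebra K E] {t : ι → E}

/-- The embedding `K(x_i : i ∈ ι) → E` with `x_i ↦ t_i`, for algebraically independent `t`. -/
def substHom (ht : AlgebraicIndependent K t) : RFF K ι →ₐ[K] E :=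
  (val _).comp ht.aevalEquivField.toAlgHom

theorem substHom_algebraMap (ht : AlgebraicIndependent K t) (p : MvPolynomial ι K) :
    substHom ht (algebraMap _ (RFF K ι) p) = MvPolynomial.aeval t p :=
  ht.aevalEquivField_algebraMap_apply_coe p

theorem substHom_Xvar (ht : AlgebraicIndependent K t) (i : ι) :
    substHom ht (Xvar K ι i) = t i := by
  rw [Xvar, substHom_algebraMap, MvPolynomial.aeval_X]

theorem fieldRange_substHom (ht : AlgebraicIndependent K t) :
    (substHom ht).fieldRange = adjoin K (Set.range t) := by
  have hX : substHom ht ∘ Xvar K ι = t := funext (substHom_Xvar ht)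
  rw [AlgHom.fieldRange_eq_map, ← adjoin_range_Xvar, adjoin_map, ← Set.range_comp, hX]

end Substitution

theorem mem_span_range_sum_monoidHom_smul {M L V ι : Type*} [Monoid M] [Field L] [AddCommGroup V]
    [Module L V] [Fintype ι] {χ : ι → M →* L} (hχ : Function.Injective χ) (w : ι → V) (i : ι) :
    w i ∈ Submodule.span L (Set.range fun b : M ↦ ∑ j, χ j b • w j) := by
  classical
  have htop : Submodule.span L (Set.range fun b : M ↦ fun j ↦ χ j b) = ⊤ := by
    by_contra hne
    obtain ⟨φ, hφ0, hφ⟩ := Submodule.exists_le_ker_of_lt_top _ (lt_top_iff_ne_top.2 hne)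
    obtain ⟨c, rfl⟩ := (dotProductEquiv L ι).surjective φ
    refine hφ0 ((map_eq_zero_iff _ (dotProductEquiv L ι).injective).2 (funext ?_))
    refine Fintype.linearIndependent_iff.1 ((linearIndependent_monoidHom M L).comp χ hχ) c ?_
    ext b
    have hb : c ⬝ᵥ (fun j ↦ χ j b) = 0 := hφ (Submodule.subset_span ⟨b, rfl⟩)
    simpa [dotProduct] using hb
  have h := Submodule.mem_map_of_mem (f := Fintype.linearCombination L w)
    (htop ▸ Submodule.mem_top : Pi.single i 1 ∈ Submodule.span L _)
  rw [Submodule.map_span, ← Set.range_comp] at h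
  simpa [Function.comp_def, Fintype.linearCombination_apply] using h

section GaloisDescent

variable (K L I : Type) [Field K] [Field L] [Algebra K L]

/-- The action of `Gal(L/K)` on `L(x_i : i ∈ I)` through the coefficients. -/
def coeffAct : (L ≃ₐ[K] L) →* (RFF L I ≃ₐ[K] RFF L I) :=
  (IsFractionRing.fieldEquivOfAlgEquivHom K (RFF L I)).comp
    { toFun := fun τ ↦ MvPolynomial.mapAlgEquiv I τ
      map_one' := AlgEquiv.ext MvPolynomial.map_id
      map_mul' := fun σ τ ↦ AlgEquiv.ext fun p ↦
        (MvPolynomial.map_map (τ : L →+* L) (σ : L →+* L) p).symm }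

/-- The inclusion of `K(x_i : i ∈ I)` in `L(x_i : i ∈ I)`. -/
def baseChange : RFF K I →ₐ[K] RFF L I :=
  substHom (algebraicIndependent_Xvar.restrictScalars (algebraMap K L).injective)

variable {K L I}

theorem coeffAct_algebraMap (τ : L ≃ₐ[K] L) (p : MvPolynomial I L) :
    coeffAct K L I τ (algebraMap _ (RFF L I) p) =
      algebraMap _ (RFF L I) (MvPolynomial.map (τ : L →+* L) p) := by
  simp [coeffAct, IsFractionRing.fieldEquivOfAlgEquivHom_apply]

@[simp]
theorem coeffAct_algebraMap_coeff (τ : L ≃ₐ[K] L) (a : L) :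
    coeffAct K L I τ (algebraMap L (RFF L I) a) = algebraMap L (RFF L I) (τ a) := by
  simp [IsScalarTower.algebraMap_apply L (MvPolynomial I L) (RFF L I), coeffAct_algebraMap,
    MvPolynomial.algebraMap_eq]

@[simp]
theorem coeffAct_smul (τ : L ≃ₐ[K] L) (a : L) (f : RFF L I) :
    coeffAct K L I τ (a • f) = τ a • coeffAct K L I τ f := by
  simp [Algebra.smul_def]

@[simp]
theorem coeffAct_Xvar (τ : L ≃ₐ[K] L) (i : I) : coeffAct K L I τ (Xvar L I i) = Xvar L I i := by
  simp [Xvar, coeffAct_algebraMap]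

theorem coeffAct_permHom (τ : L ≃ₐ[K] L) (g : Equiv.Perm I) (f : RFF L I) :
    coeffAct K L I τ (permHom L I g f) = permHom L I g (coeffAct K L I τ f) := by
  obtain ⟨p, q, -, rfl⟩ := IsFractionRing.div_surjective (A := MvPolynomial I L) f
  simp only [map_div₀, coeffAct_algebraMap, permHom_algebraMap, MvPolynomial.map_rename]

theorem coeffAct_aeval {ι : Type*} {t : ι → RFF L I} {τ : L ≃ₐ[K] L}
    (ht : ∀ i, coeffAct K L I τ (t i) = t i) (p : MvPolynomial ι L) :
    coeffAct K L I τ (MvPolynomial.aeval t p) =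
      MvPolynomial.aeval t (MvPolynomial.map (τ : L →+* L) p) := by
  induction p using MvPolynomial.induction_on with
  | C a => simp
  | add p q hp hq => simp only [map_add, hp, hq]
  | mul_X p i hp => simp only [map_mul, hp, MvPolynomial.aeval_X, MvPolynomial.map_X, ht]

theorem coeffAct_mem_span {ι : Type*} {u : ι → RFF L I} {τ : L ≃ₐ[K] L}
    (hu : ∀ i, coeffAct K L I τ (u i) ∈ Submodule.span L (Set.range u)) {f : RFF L I}
    (hf : f ∈ Submodule.span L (Set.range u)) :
    coeffAct K L I τ f ∈ Submodule.span L (Set.range u) := by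
  induction hf using Submodule.span_induction with
  | mem f hf => obtain ⟨i, rfl⟩ := hf; exact hu i
  | zero => simp
  | add f g _ _ hf hg => rw [map_add]; exact add_mem hf hg
  | smul a f _ hf => rw [coeffAct_smul]; exact Submodule.smul_mem _ _ hf

theorem baseChange_permHom (g : Equiv.Perm I) (f : RFF K I) :
    baseChange K L I (permHom K I g f) = permHom L I g (baseChange K L I f) := by
  obtain ⟨p, q, -, rfl⟩ := IsFractionRing.div_surjective (A := MvPolynomial I K) f
  have h (r : MvPolynomial I K) : MvPolynomial.aeval (Xvar L I) (MvPolynomial.rename g r) =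
      permHom L I g (MvPolynomial.aeval (Xvar L I) r) := by
    rw [MvPolynomial.aeval_rename]
    refine .trans ?_ (MvPolynomial.comp_aeval_apply (Xvar L I)
      ((permHom L I g).restrictScalars K).toAlgHom r).symm
    exact congrArg (MvPolynomial.aeval · r) (funext fun i ↦ (permHom_Xvar g i).symm)
  simp only [baseChange, map_div₀, substHom_algebraMap, permHom_algebraMap, h]

theorem baseChange_mem_fixedSub_iff {G : Subgroup (Equiv.Perm I)} {f : RFF K I} :
    baseChange K L I f ∈ fixedSub L I G ↔ f ∈ fixedSub K I G := by
  simp_rw [mem_fixedSub, ← baseChange_permHom]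
  exact forall₂_congr fun _ _ ↦ (baseChange K L I).injective.eq_iff

variable [FiniteDimensional K L]

theorem mem_span_setOf_coeffAct_eq {N : Submodule L (RFF L I)}
    (hN : ∀ τ : L ≃ₐ[K] L, ∀ f ∈ N, coeffAct K L I τ f ∈ N) :
    Submodule.span L {f ∈ N | ∀ τ : L ≃ₐ[K] L, coeffAct K L I τ f = f} = N := by
  refine le_antisymm (Submodule.span_le.2 fun f hf ↦ hf.1) fun f hf ↦ ?_
  have h := mem_span_range_sum_monoidHom_smul (χ := fun τ : L ≃ₐ[K] L ↦ (τ : L →* L))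
    (fun σ τ h ↦ AlgEquiv.ext (DFunLike.congr_fun h :)) (fun τ ↦ coeffAct K L I τ f) 1
  rw [map_one, AlgEquiv.one_apply] at h
  refine Submodule.span_mono ?_ h
  rintro _ ⟨b, rfl⟩
  refine ⟨sum_mem fun τ _ ↦ N.smul_mem _ (hN τ f hf), fun τ ↦ ?_⟩
  rw [map_sum]
  exact Fintype.sum_equiv (Equiv.mulLeft τ) _ _ fun ρ ↦ by simp

variable [IsGalois K L]

theorem mem_adjoin_of_coeffAct_eq {ι : Type*} {t : ι → RFF L I} (ht : AlgebraicIndependent L t)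
    (htτ : ∀ (τ : L ≃ₐ[K] L) i, coeffAct K L I τ (t i) = t i) {f : RFF L I}
    (hf : f ∈ adjoin L (Set.range t)) (hfτ : ∀ τ : L ≃ₐ[K] L, coeffAct K L I τ f = f) :
    f ∈ adjoin K (Set.range t) := by
  obtain ⟨p, q, rfl⟩ := (mem_adjoin_range_iff ..).1 hf
  have : Finite (coeffAct K L I).range := .of_surjective _ (coeffAct K L I).rangeRestrict_surjective
  refine div_mem_of_smul_eq (H := (coeffAct K L I).range)
    (R := (MvPolynomial.aeval (R := L) t).range) ?_ ?_
    (AlgHom.mem_range_self _ p) (AlgHom.mem_range_self _ q) ?_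
  · rintro ⟨_, τ, rfl⟩ _ ⟨r, rfl⟩
    exact ⟨_, (coeffAct_aeval (htτ τ) r).symm⟩
  · rintro _ ⟨r, rfl⟩ hr
    have hcoeff (τ : L ≃ₐ[K] L) : MvPolynomial.map (τ : L →+* L) r = r :=
      ht ((coeffAct_aeval (htτ τ) r).symm.trans (hr ⟨_, τ, rfl⟩))
    obtain ⟨s, rfl⟩ : r ∈ Set.range (MvPolynomial.map (algebraMap K L)) := by
      rw [MvPolynomial.mem_range_map_iff_coeffs_subset]
      intro c hc
      obtain ⟨n, -, rfl⟩ := MvPolynomial.mem_coeffs_iff.1 hc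
      refine (IsGalois.mem_range_algebraMap_iff_fixed _).2 fun τ ↦ ?_
      conv_rhs => rw [← hcoeff τ, MvPolynomial.coeff_map]
      rfl
    refine algebra_adjoin_le_adjoin K _ ?_
    rw [Algebra.adjoin_range_eq_range_aeval]
    exact ⟨s, (MvPolynomial.aeval_map_algebraMap L t s).symm⟩
  · rintro ⟨_, τ, rfl⟩
    exact hfτ τ

theorem fieldRange_baseChange :
    (baseChange K L I).fieldRange = fixedField (coeffAct K L I).range := by
  refine (fieldRange_substHom _).trans (le_antisymm (adjoin_le_iff.2 ?_) fun f hf ↦ ?_)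
  · rintro _ ⟨i, rfl⟩ ⟨_, τ, rfl⟩
    exact coeffAct_Xvar τ i
  · refine mem_adjoin_of_coeffAct_eq algebraicIndependent_Xvar coeffAct_Xvar ?_ fun τ ↦
      hf ⟨_, τ, rfl⟩
    rw [adjoin_range_Xvar]
    exact mem_top

theorem exists_baseChange_eq_iff {f : RFF L I} :
    (∃ h, baseChange K L I h = f) ↔ ∀ τ : L ≃ₐ[K] L, coeffAct K L I τ f = f := by
  refine (SetLike.ext_iff.1 fieldRange_baseChange f).trans ?_
  simp [mem_fixedField_iff]

variable {G : Subgroup (Equiv.Perm I)}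

theorem adjoin_image_baseChange_fixedSub :
    adjoin L (baseChange K L I '' fixedSub K I G) = fixedSub L I G := by
  refine le_antisymm (adjoin_le_iff.2 ?_) fun f hf ↦ ?_
  · rintro _ ⟨h, hh, rfl⟩
    exact baseChange_mem_fixedSub_iff.2 hh
  · have hstable (τ : L ≃ₐ[K] L) : ∀ f ∈ (fixedSub L I G).toSubalgebra.toSubmodule,
        coeffAct K L I τ f ∈ (fixedSub L I G).toSubalgebra.toSubmodule := fun f hf ↦
      mem_fixedSub.2 fun g hg ↦ by
        rw [← coeffAct_permHom, mem_fixedSub.1 (hf : f ∈ fixedSub L I G) g hg]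
    refine (Submodule.span_le (p := (adjoin L _).toSubalgebra.toSubmodule)).2 ?_
      ((mem_span_setOf_coeffAct_eq hstable).ge hf)
    rintro _ ⟨hfG, hfτ⟩
    obtain ⟨h, rfl⟩ := exists_baseChange_eq_iff.2 hfτ
    exact subset_adjoin L _ ⟨h, baseChange_mem_fixedSub_iff.1 hfG, rfl⟩

theorem isRatExt_fixedSub_iff_exists_coeffAct_eq :
    IsRatExt K (fixedSub K I G) ↔ ∃ (n : ℕ) (t : Fin n → RFF L I),
      (∀ (τ : L ≃ₐ[K] L) i, coeffAct K L I τ (t i) = t i) ∧ AlgebraicIndependent L t ∧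
        adjoin L (Set.range t) = fixedSub L I G := by
  rw [isRatExt_iff_exists_adjoin_eq]
  constructor
  · rintro ⟨n, s, hs, hsG⟩
    refine ⟨n, baseChange K L I ∘ s, fun τ i ↦ exists_baseChange_eq_iff.1 ⟨s i, rfl⟩ τ,
      (hs.map' (baseChange K L I).injective).extendScalars L, ?_⟩
    rw [← adjoin_image_baseChange_fixedSub (K := K), ← hsG, Set.range_comp]
    refine le_antisymm (adjoin.mono L _ _ (Set.image_mono (subset_adjoin K _)))
      (adjoin_le_iff.2 (Set.image_subset_iff.2 ?_))
    change adjoin K (Set.range s) ≤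
      ((adjoin L (baseChange K L I '' Set.range s)).restrictScalars K).comap (baseChange K L I)
    exact adjoin_le_iff.2 fun f hf ↦ subset_adjoin L _ (Set.mem_image_of_mem _ hf)
  · rintro ⟨n, t, htτ, ht, htG⟩
    choose s hs using fun i ↦ exists_baseChange_eq_iff.2 (htτ · i)
    obtain rfl : baseChange K L I ∘ s = t := funext hs
    refine ⟨n, s, .of_comp (baseChange K L I) (ht.restrictScalars (algebraMap K L).injective),
      le_antisymm (adjoin_le_iff.2 ?_) fun f hf ↦ ?_⟩
    · rintro _ ⟨i, rfl⟩
      exact baseChange_mem_fixedSub_iff.1 (htG.le (subset_adjoin L _ ⟨i, rfl⟩))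
    · have h := mem_adjoin_of_coeffAct_eq ht htτ (htG ▸ baseChange_mem_fixedSub_iff.2 hf)
        (exists_baseChange_eq_iff.1 ⟨f, rfl⟩)
      rw [Set.range_comp, ← adjoin_map] at h
      obtain ⟨f', hf', hff'⟩ := h
      rwa [← (baseChange K L I).injective hff']

theorem isRatExt_fixedSub_of_span_stable [Finite I] {ι : Type} [Finite ι]
    (hι : Cardinal.mk ι ≤ Cardinal.mk I) {u : ι → RFF L I}
    (huG : adjoin L (Set.range u) = fixedSub L I G)
    (hu : ∀ (τ : L ≃ₐ[K] L) i, coeffAct K L I τ (u i) ∈ Submodule.span L (Set.range u)) :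
    IsRatExt K (fixedSub K I G) := by
  obtain ⟨b, hbS, hb, hbi⟩ := exists_linearIndependent L
    {f ∈ Submodule.span L (Set.range u) | ∀ τ : L ≃ₐ[K] L, coeffAct K L I τ f = f}
  rw [mem_span_setOf_coeffAct_eq fun τ _ ↦ coeffAct_mem_span (hu τ)] at hb
  have hbι : Cardinal.mk b ≤ Cardinal.mk ι := by
    rw [← rank_span_set hbi, hb]
    exact (rank_span_le _).trans Cardinal.mk_range_le
  have hbfin : Finite b := Cardinal.lt_aleph0_iff_finite.1
    (hbι.trans_lt (Cardinal.lt_aleph0_iff_finite.2 inferInstance))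
  obtain ⟨n, ⟨e⟩⟩ := Finite.exists_equiv_fin b
  have hrange : Set.range (Subtype.val ∘ e.symm) = b := by
    rw [EquivLike.range_comp, Subtype.range_coe]
  have hbG : adjoin L (Set.range (Subtype.val ∘ e.symm)) = fixedSub L I G := by
    rw [hrange, ← adjoin_coe_span, hb, adjoin_coe_span, huG]
  refine isRatExt_fixedSub_iff_exists_coeffAct_eq.2 ⟨n, _, fun τ i ↦ (hbS (e.symm i).2).2 τ,
    algebraicIndependent_of_adjoin_eq_fixedSub ?_ hbG, hbG⟩
  exact (Cardinal.mk_congr e.symm).le.trans (hbι.trans hι)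

end GaloisDescent

section Kummer

theorem pow_eq_one_of_apply_eq_smul {K E : Type*} [Field K] [Field E] [Algebra K E]
    {σ : E ≃ₐ[K] E} {ζ : K} {y : E} (hy0 : y ≠ 0) (hσy : σ y = ζ • y) {n : ℕ} (hσ : σ ^ n = 1) :
    ζ ^ n = 1 := by
  have hpow (m : ℕ) : (σ ^ m) y = ζ ^ m • y := by
    induction m with
    | zero => simp
    | succ m ih => rw [pow_succ', AlgEquiv.mul_apply, ih, map_smul, hσy, smul_smul, pow_succ]
  have h := hpow n
  rw [hσ, AlgEquiv.one_apply] at h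
  exact smul_left_injective K hy0 (h.symm.trans (one_smul K y).symm)

theorem eq_fixedField_zpowers_of_pow_mem {K E : Type*} [Field K] [Field E] [Algebra K E]
    {M : IntermediateField K E} {σ : E ≃ₐ[K] E} (hσ : IsOfFinOrder σ) {n : ℕ} {ζ : K}
    (hζ : IsPrimitiveRoot ζ n) (hn : n ≠ 0) {y : E} (hy0 : y ≠ 0) (hσy : σ y = ζ • y)
    (hM : M ≤ fixedField (Subgroup.zpowers σ)) (hyn : y ^ n ∈ M) (htop : M ⊔ K⟮y⟯ = ⊤) :
    M = fixedField (Subgroup.zpowers σ) := by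
  have hfin : Finite (Subgroup.zpowers σ) := hσ.finite_zpowers
  have hroot : Polynomial.aeval y (Polynomial.X ^ n - Polynomial.C (⟨y ^ n, hyn⟩ : M)) = 0 := by
    simp
  have hmonic := Polynomial.monic_X_pow_sub_C (⟨y ^ n, hyn⟩ : M) hn
  have hint : IsIntegral M y := ⟨_, hmonic, hroot⟩
  have hMy : M⟮y⟯ = ⊤ := by
    rw [← restrictScalars_eq_top_iff (K := K), restrictScalars_adjoin, adjoin_union, adjoin_self,
      htop]
  have hcard : n ≤ Nat.card (Subgroup.zpowers σ) := by
    rw [Nat.card_zpowers]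
    exact Nat.le_of_dvd hσ.orderOf_pos (hζ.dvd_of_pow_eq_one _
      (pow_eq_one_of_apply_eq_smul hy0 hσy (pow_orderOf_eq_one σ)))
  have : FiniteDimensional M (⊤ : IntermediateField M E) := hMy ▸ adjoin.finiteDimensional hint
  have : FiniteDimensional M E := .equiv (topEquiv (F := M) (E := E)).toLinearEquiv
  refine eq_of_le_of_finrank_le' hM ?_
  calc Module.finrank M E = (minpoly M y).natDegree := by
        rw [← finrank_top', ← hMy, adjoin.finrank hint]
    _ ≤ n := by
        rw [← Polynomial.natDegree_X_pow_sub_C (n := n) (r := (⟨y ^ n, hyn⟩ : M))]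
        exact Polynomial.natDegree_le_natDegree (minpoly.min M y hmonic hroot)
    _ ≤ Nat.card (Subgroup.zpowers σ) := hcard
    _ = Module.finrank (fixedField (Subgroup.zpowers σ)) E := by
        have := Fintype.ofFinite (Subgroup.zpowers σ)
        rw [Nat.card_eq_fintype_card]
        exact (FixedPoints.finrank_eq_card (Subgroup.zpowers σ) E).symm

end Kummer

section LagrangeResolvent

variable {K L I : Type} [Field K] [Field L] [Algebra K L]

/-- The Lagrange resolvent `∑ₖ ζ^(jk) x_{g⁻ᵏ(i)}`, where `k` runs over `0, …, |I| - 1`. The inverse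
powers of `g` make it an eigenvector of `g` with eigenvalue `ζ^j`. -/
def lagrangeResolvent (ζ : L) (g : Equiv.Perm I) (i : I) (j : ℕ) : RFF L I :=
  ∑ k ∈ Finset.range (Nat.card I), ζ ^ (j * k) • Xvar L I ((g⁻¹ ^ k) i)

variable {ζ : L} {g : Equiv.Perm I} {i : I}

theorem lagrangeResolvent_mod (hζ : ζ ^ Nat.card I = 1) (j : ℕ) :
    lagrangeResolvent ζ g i (j % Nat.card I) = lagrangeResolvent ζ g i j := by
  simp only [lagrangeResolvent, pow_mul, ← pow_eq_pow_mod j hζ]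

theorem coeffAct_lagrangeResolvent (hζ : ζ ^ Nat.card I = 1) {τ : L ≃ₐ[K] L} {k : ℕ}
    (hτ : τ ζ = ζ ^ k) (j : ℕ) :
    coeffAct K L I τ (lagrangeResolvent ζ g i j) =
      lagrangeResolvent ζ g i (k * j % Nat.card I) := by
  rw [lagrangeResolvent_mod hζ]
  simp [lagrangeResolvent, hτ, ← pow_mul, mul_assoc]

variable [Finite I]

theorem permHom_lagrangeResolvent (hg : g.IsCycleOn Set.univ) (hζ : ζ ^ Nat.card I = 1) (j : ℕ) :
    permHom L I g (lagrangeResolvent ζ g i j) = ζ ^ j • lagrangeResolvent ζ g i j := by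
  have hgn : g⁻¹ ^ Nat.card I = 1 := by
    rw [inv_pow, pow_natCard_eq_one_of_isCycleOn_univ hg, inv_one]
  have hshift : lagrangeResolvent ζ g i j =
      ∑ k ∈ Finset.range (Nat.card I), ζ ^ (j * (k + 1)) • Xvar L I ((g⁻¹ ^ (k + 1)) i) := by
    refine add_right_cancel (b := Xvar L I i) ?_
    have h := (Finset.sum_range_succ (fun k ↦ ζ ^ (j * k) • Xvar L I ((g⁻¹ ^ k) i))
      (Nat.card I)).symm.trans (Finset.sum_range_succ' _ _)
    simpa only [lagrangeResolvent, hgn, mul_comm j (Nat.card I), pow_mul, hζ, one_pow, one_smul,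
      mul_zero, pow_zero, Equiv.Perm.one_apply] using h
  conv_lhs => rw [hshift, map_sum]
  rw [lagrangeResolvent, Finset.smul_sum]
  refine Finset.sum_congr rfl fun k _ ↦ ?_
  rw [map_smul, permHom_Xvar, smul_smul, pow_succ' g⁻¹, Equiv.Perm.mul_apply,
    Equiv.Perm.inv_def, Equiv.apply_symm_apply, ← pow_add, mul_add_one, add_comm]

theorem sum_lagrangeResolvent (hζ : IsPrimitiveRoot ζ (Nat.card I)) :
    ∑ j ∈ Finset.range (Nat.card I), lagrangeResolvent ζ g i j = (Nat.card I : L) • Xvar L I i := by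
  have : Nonempty I := ⟨i⟩
  simp only [lagrangeResolvent]
  rw [Finset.sum_comm, Finset.sum_eq_single_of_mem 0 (Finset.mem_range.2 Nat.card_pos)]
  · simp [← Nat.cast_smul_eq_nsmul L]
  · intro k hk hk0
    have hζk : ζ ^ k ≠ 1 := hζ.pow_ne_one_of_pos_of_lt hk0 (Finset.mem_range.1 hk)
    have hgeom : ∑ j ∈ Finset.range (Nat.card I), (ζ ^ k) ^ j = 0 := by
      rw [geom_sum_eq hζk, ← pow_mul, mul_comm, pow_mul, hζ.pow_eq_one, one_pow, sub_self, zero_div]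
    simp only [← Finset.sum_smul, mul_comm _ k, pow_mul, hgeom, zero_smul]

theorem adjoin_lagrangeResolvent (hg : g.IsCycleOn Set.univ)
    (hζ : IsPrimitiveRoot ζ (Nat.card I)) :
    adjoin L (Set.range fun j : Fin (Nat.card I) ↦ lagrangeResolvent ζ g i j) = ⊤ := by
  have : Nonempty I := ⟨i⟩
  have : NeZero (Nat.card I) := ⟨Nat.card_pos.ne'⟩
  have hn : (Nat.card I : L) ≠ 0 := (hζ.neZero').ne
  set T := adjoin L (Set.range fun j : Fin (Nat.card I) ↦ lagrangeResolvent ζ g i j)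
  have hy {j : ℕ} (hj : j ∈ Finset.range (Nat.card I)) : lagrangeResolvent ζ g i j ∈ T :=
    subset_adjoin L _ ⟨⟨j, Finset.mem_range.1 hj⟩, rfl⟩
  have hsum (m : ℕ) : Xvar L I ((g ^ m) i) = (Nat.card I : L)⁻¹ •
      ∑ j ∈ Finset.range (Nat.card I), (ζ ^ j) ^ m • lagrangeResolvent ζ g i j := by
    induction m with
    | zero => simp [sum_lagrangeResolvent hζ, smul_smul, hn]
    | succ m ih =>
      rw [pow_succ', Equiv.Perm.mul_apply, ← permHom_Xvar, ih]
      simp only [map_smul, map_sum, permHom_lagrangeResolvent hg hζ.pow_eq_one,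
        smul_smul, pow_succ]
  rw [← top_le_iff, ← adjoin_range_Xvar, adjoin_le_iff]
  rintro _ ⟨i', rfl⟩
  obtain ⟨m, rfl⟩ := hg.exists_pow_eq' Set.finite_univ (Set.mem_univ i) (Set.mem_univ i')
  rw [hsum]
  exact T.smul_mem (sum_mem fun j hj ↦ T.smul_mem (hy hj))

theorem algebraicIndependent_lagrangeResolvent (hg : g.IsCycleOn Set.univ)
    (hζ : IsPrimitiveRoot ζ (Nat.card I)) :
    AlgebraicIndependent L fun j : Fin (Nat.card I) ↦ lagrangeResolvent ζ g i j :=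
  algebraicIndependent_of_adjoin_eq_top (by rw [Cardinal.mk_fin, Nat.cast_card])
    (adjoin_lagrangeResolvent hg hζ)

theorem lagrangeResolvent_ne_zero (hg : g.IsCycleOn Set.univ)
    (hζ : IsPrimitiveRoot ζ (Nat.card I)) (j : ℕ) : lagrangeResolvent ζ g i j ≠ 0 := by
  have : Nonempty I := ⟨i⟩
  rw [← lagrangeResolvent_mod hζ.pow_eq_one]
  exact (algebraicIndependent_lagrangeResolvent hg hζ).ne_zero ⟨_, Nat.mod_lt j Nat.card_pos⟩

theorem adjoin_eq_fixedSub_zpowers (hg : g.IsCycleOn Set.univ)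
    (hζ : IsPrimitiveRoot ζ (Nat.card I)) {s : Set (RFF L I)}
    (hs : ∀ f ∈ s, permHom L I g f = f)
    (hpow : lagrangeResolvent ζ g i 1 ^ Nat.card I ∈ adjoin L s)
    (htop : ∀ j < Nat.card I,
      lagrangeResolvent ζ g i j ∈ adjoin L (insert (lagrangeResolvent ζ g i 1) s)) :
    adjoin L s = fixedSub L I (Subgroup.zpowers g) := by
  have : Nonempty I := ⟨i⟩
  have hσ : IsOfFinOrder (permHom L I g) :=
    (permHom L I).isOfFinOrder (isOfFinOrder_of_finite g)
  rw [fixedSub, MonoidHom.map_zpowers]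
  refine eq_fixedField_zpowers_of_pow_mem hσ hζ Nat.card_pos.ne'
    (lagrangeResolvent_ne_zero hg hζ 1)
    (by rw [permHom_lagrangeResolvent hg hζ.pow_eq_one, pow_one]) ?_ hpow ?_
  · rw [← MonoidHom.map_zpowers]
    exact adjoin_le_iff.2 fun f hf ↦ mem_fixedSub_zpowers.2 (hs f hf)
  · rw [← adjoin_union, Set.union_singleton, ← top_le_iff,
      ← adjoin_lagrangeResolvent (i := i) hg hζ,
      adjoin_le_iff]
    rintro _ ⟨j, rfl⟩
    exact htop j j.2

theorem isRatExt_fixedSub_zpowers [FiniteDimensional K L] [IsGalois K L]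
    (hg : g.IsCycleOn Set.univ) (hζ : IsPrimitiveRoot ζ (Nat.card I)) {τ : L ≃ₐ[K] L}
    (hτ : ∀ σ, σ ∈ Submonoid.powers τ) {ι : Type} [Finite ι]
    (hι : Cardinal.mk ι ≤ Cardinal.mk I) {u : ι → RFF L I}
    (hug : ∀ k, permHom L I g (u k) = u k)
    (huτ : ∀ k, coeffAct K L I τ (u k) ∈ Submodule.span L (Set.range u))
    (hpow : lagrangeResolvent ζ g i 1 ^ Nat.card I ∈ adjoin L (Set.range u))
    (htop : ∀ j < Nat.card I,
      lagrangeResolvent ζ g i j ∈ adjoin L (insert (lagrangeResolvent ζ g i 1) (Set.range u))) :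
    IsRatExt K (fixedSub K I (Subgroup.zpowers g)) := by
  refine isRatExt_fixedSub_of_span_stable hι
    (adjoin_eq_fixedSub_zpowers hg hζ (Set.forall_mem_range.2 hug) hpow htop) fun σ k ↦ ?_
  obtain ⟨m, rfl⟩ := hτ σ
  induction m with
  | zero => simpa using Submodule.subset_span (Set.mem_range_self k)
  | succ m ih =>
    simp only [pow_succ', map_mul, AlgEquiv.mul_apply] at ih ⊢
    exact coeffAct_mem_span huτ ih

end LagrangeResolvent

section Octic

variable {L E : Type*} [Field L] [Field E] [Algebra L E] {σ τ : E →+* E} {z : E} {y : ℕ → E}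

/-- The formal properties of the Lagrange resolvents `y₀, …, y₇` of an 8-cycle acting by `σ`,
together with a coefficient automorphism `τ` raising the 8th root of unity `z` to the power `k`. -/
structure IsOcticSystem (σ τ : E →+* E) (k : ℕ) (z : E) (y : ℕ → E) : Prop where
  pow_eq_one : z ^ 8 = 1
  ne_zero (j : ℕ) : y j ≠ 0
  cycle_apply (j : ℕ) : σ (y j) = z ^ j * y j
  coeff_apply (j : ℕ) : τ (y j) = y (k * j % 8)

/-- The elements `u` are fixed by `σ`, have a `τ`-stable `L`-span, generate `y₁⁸` over `L`, and
together with `y₁` generate all of `y₀, …, y₇`. -/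
structure IsOcticGenerators (L : Type*) [Field L] [Algebra L E] (σ τ : E →+* E) (y : ℕ → E)
    (u : Fin 8 → E) : Prop where
  cycle_apply (i : Fin 8) : σ (u i) = u i
  coeff_mem_span (i : Fin 8) : τ (u i) ∈ Submodule.span L (Set.range u)
  pow_mem : y 1 ^ 8 ∈ adjoin L (Set.range u)
  mem_adjoin (j : Fin 8) : y j ∈ adjoin L (insert (y 1) (Set.range u))

theorem mem_of_div_mem {T : IntermediateField L E} {a b : E} (hb0 : b ≠ 0) (hab : a / b ∈ T)
    (hb : b ∈ T) : a ∈ T := by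
  rw [← div_mul_cancel₀ a hb0]
  exact mul_mem hab hb

theorem IsOcticSystem.exists_generators_one (h : IsOcticSystem σ τ 1 z y) :
    ∃ u, IsOcticGenerators L σ τ y u := by
  have hz0 : z ≠ 0 := fun hz ↦ by simpa [hz] using h.pow_eq_one
  have hy0 := h.ne_zero
  let u : Fin 8 → E := ![y 0, y 1 ^ 8, y 2 / y 1 ^ 2, y 3 / y 1 ^ 3, y 4 / y 1 ^ 4, y 5 / y 1 ^ 5,
    y 6 / y 1 ^ 6, y 7 / y 1 ^ 7]
  refine ⟨u, fun i ↦ ?_, fun i ↦ Submodule.subset_span ⟨i, ?_⟩, subset_adjoin L _ ⟨1, rfl⟩,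
    fun j ↦ ?_⟩
  · fin_cases i <;> simp [u, h.cycle_apply, mul_pow, h.pow_eq_one] <;> field_simp [hy0]
  · fin_cases i <;> simp [u, h.coeff_apply]
  · set T := adjoin L (insert (y 1) (Set.range u))
    have hu (i) : u i ∈ T := subset_adjoin L _ (.inr ⟨i, rfl⟩)
    have hy1 (n : ℕ) : y 1 ^ n ∈ T := pow_mem (subset_adjoin L _ (.inl rfl)) n
    have hy (j) (hj : y j / y 1 ^ j ∈ T) : y j ∈ T :=
      mem_of_div_mem (pow_ne_zero j (hy0 1)) hj (hy1 j)
    fin_cases j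
    exacts [hu 0, pow_one (y 1) ▸ hy1 1, hy 2 (hu 2), hy 3 (hu 3), hy 4 (hu 4), hy 5 (hu 5),
      hy 6 (hu 6), hy 7 (hu 7)]

theorem IsOcticSystem.exists_generators_three (h : IsOcticSystem σ τ 3 z y) :
    ∃ u, IsOcticGenerators L σ τ y u := by
  have hz0 : z ≠ 0 := fun hz ↦ by simpa [hz] using h.pow_eq_one
  have hy0 := h.ne_zero
  let u : Fin 8 → E := ![y 1 / y 3 ^ 3, y 3 / y 1 ^ 3, y 2 / y 1 ^ 2, y 6 / y 3 ^ 2,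
    y 5 / y 1 ^ 5, y 7 / y 3 ^ 5, y 0, y 4 / (y 1 * y 3)]
  refine ⟨u, fun i ↦ ?_, fun i ↦ Submodule.subset_span ⟨![1, 0, 3, 2, 5, 4, 6, 7] i, ?_⟩, ?_,
    fun j ↦ ?_⟩
  · fin_cases i <;> simp [u, h.cycle_apply] <;> field_simp [hy0] <;> simp [h.pow_eq_one]
  · fin_cases i <;> simp [u, h.coeff_apply, mul_comm]
  · have hu (i) : u i ∈ adjoin L (Set.range u) := subset_adjoin L _ ⟨i, rfl⟩
    have hpow : y 1 ^ 8 = (u 0 * u 1 ^ 3)⁻¹ := by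
      simp only [u, Matrix.cons_val]
      field_simp [hy0]
    rw [hpow]
    exact inv_mem (mul_mem (hu 0) (pow_mem (hu 1) 3))
  · set T := adjoin L (insert (y 1) (Set.range u))
    have hu (i) : u i ∈ T := subset_adjoin L _ (.inr ⟨i, rfl⟩)
    have hy1 : y 1 ∈ T := subset_adjoin L _ (.inl rfl)
    have hy3 : y 3 ∈ T := mem_of_div_mem (pow_ne_zero 3 (hy0 1)) (hu 1) (pow_mem hy1 3)
    have hy (j l n) (hl : y l ∈ T) (hj : y j / y l ^ n ∈ T) : y j ∈ T :=
      mem_of_div_mem (pow_ne_zero n (hy0 l)) hj (pow_mem hl n)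
    have hy4 := mem_of_div_mem (mul_ne_zero (hy0 1) (hy0 3)) (hu 7) (mul_mem hy1 hy3)
    fin_cases j
    exacts [hu 6, hy1, hy 2 1 2 hy1 (hu 2), hy3, hy4, hy 5 1 5 hy1 (hu 4), hy 6 3 2 hy3 (hu 3),
      hy 7 3 5 hy3 (hu 5)]

theorem IsOcticSystem.exists_generators_five (h : IsOcticSystem σ τ 5 z y) :
    ∃ u, IsOcticGenerators L σ τ y u := by
  have hz0 : z ≠ 0 := fun hz ↦ by simpa [hz] using h.pow_eq_one
  have hy0 := h.ne_zero
  let u : Fin 8 → E := ![y 1 ^ 3 * y 5, y 5 ^ 3 * y 1, y 3 / y 1 ^ 3, y 7 / y 5 ^ 3, y 0,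
    y 6 / (y 1 * y 5), y 4 / (y 1 * y 5) ^ 2, y 2 / (y 1 * y 5) ^ 3]
  refine ⟨u, fun i ↦ ?_, fun i ↦ Submodule.subset_span ⟨![1, 0, 3, 2, 4, 5, 6, 7] i, ?_⟩, ?_,
    fun j ↦ ?_⟩
  · fin_cases i <;> simp [u, h.cycle_apply] <;> field_simp [hy0] <;> grind [h.pow_eq_one]
  · fin_cases i <;> simp [u, h.coeff_apply, mul_comm]
  · have hu (i) : u i ∈ adjoin L (Set.range u) := subset_adjoin L _ ⟨i, rfl⟩
    have hpow : y 1 ^ 8 = u 0 ^ 3 / u 1 := by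
      simp only [u, Matrix.cons_val]
      field_simp [hy0]
    rw [hpow]
    exact div_mem (pow_mem (hu 0) 3) (hu 1)
  · set T := adjoin L (insert (y 1) (Set.range u))
    have hu (i) : u i ∈ T := subset_adjoin L _ (.inr ⟨i, rfl⟩)
    have hy1 : y 1 ∈ T := subset_adjoin L _ (.inl rfl)
    have hy5 : y 5 ∈ T := by
      rw [← mul_div_cancel_left₀ (y 5) (pow_ne_zero 3 (hy0 1))]
      exact div_mem (hu 0) (pow_mem hy1 3)
    have hy (j l) (hl : y l ∈ T) (hj : y j / y l ^ 3 ∈ T) : y j ∈ T :=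
      mem_of_div_mem (pow_ne_zero 3 (hy0 l)) hj (pow_mem hl 3)
    have h15 : y 1 * y 5 ≠ 0 := mul_ne_zero (hy0 1) (hy0 5)
    have hN (j n) (hj : y j / (y 1 * y 5) ^ n ∈ T) : y j ∈ T :=
      mem_of_div_mem (pow_ne_zero n h15) hj (pow_mem (mul_mem hy1 hy5) n)
    fin_cases j
    exacts [hu 4, hy1, hN 2 3 (hu 7), hy 3 1 hy1 (hu 2), hN 4 2 (hu 6), hy5,
      mem_of_div_mem h15 (hu 5) (mul_mem hy1 hy5), hy 7 5 hy5 (hu 3)]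

theorem pow_eight_eq {a b : E} (h2 : (2 : E) ≠ 0) (hb : b ≠ 0) (hab : a ^ 4 + b ^ 4 ≠ 0) :
    a ^ 8 = (1 + (a ^ 4 - b ^ 4) / (a ^ 4 + b ^ 4)) / (1 - (a ^ 4 - b ^ 4) / (a ^ 4 + b ^ 4)) *
      (a * b) ^ 4 := by
  have hsub : 1 - (a ^ 4 - b ^ 4) / (a ^ 4 + b ^ 4) = 2 * b ^ 4 / (a ^ 4 + b ^ 4) := by
    field_simp
    ring
  rw [hsub]
  field_simp
  ring

theorem IsOcticSystem.exists_generators_seven (h : IsOcticSystem σ τ 7 z y) (hL : (2 : L) ≠ 0)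
    (h17 : y 1 ^ 4 + y 7 ^ 4 ≠ 0) : ∃ u, IsOcticGenerators L σ τ y u := by
  have hz0 : z ≠ 0 := fun hz ↦ by simpa [hz] using h.pow_eq_one
  have hy0 := h.ne_zero
  have h2 : (2 : E) ≠ 0 := map_ofNat (algebraMap L E) 2 ▸ (map_ne_zero _).2 hL
  let u : Fin 8 → E := ![y 2 / y 1 ^ 2, y 6 / y 7 ^ 2, y 3 / y 1 ^ 3, y 5 / y 7 ^ 3, y 0, y 1 * y 7,
    y 4 / (y 1 ^ 4 + y 7 ^ 4), (y 1 ^ 4 - y 7 ^ 4) / (y 1 ^ 4 + y 7 ^ 4)]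
  refine ⟨u, fun i ↦ ?_, fun i ↦ ?_, ?_, fun j ↦ ?_⟩
  · fin_cases i <;> simp [u, h.cycle_apply] <;> field_simp [hy0] <;> grind [h.pow_eq_one]
  · have hneg : τ (u 7) = - u 7 := by
      simp [u, h.coeff_apply, ← neg_div, add_comm]
    have huτ (i : Fin 8) (hi : i ≠ 7) : τ (u i) = u (![1, 0, 3, 2, 4, 5, 6, 7] i) := by
      fin_cases i <;> simp [u, h.coeff_apply, mul_comm, add_comm] at hi ⊢
    obtain rfl | hi := eq_or_ne i 7
    · exact hneg ▸ neg_mem (Submodule.subset_span ⟨7, rfl⟩)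
    · exact huτ i hi ▸ Submodule.subset_span ⟨_, rfl⟩
  · have hu (i) : u i ∈ adjoin L (Set.range u) := subset_adjoin L _ ⟨i, rfl⟩
    have hpow : y 1 ^ 8 = (1 + u 7) / (1 - u 7) * u 5 ^ 4 := pow_eight_eq h2 (hy0 7) h17
    rw [hpow]
    exact mul_mem (div_mem (add_mem (one_mem _) (hu 7)) (sub_mem (one_mem _) (hu 7)))
      (pow_mem (hu 5) 4)
  · set T := adjoin L (insert (y 1) (Set.range u))
    have hu (i) : u i ∈ T := subset_adjoin L _ (.inr ⟨i, rfl⟩)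
    have hy1 : y 1 ∈ T := subset_adjoin L _ (.inl rfl)
    have hy7 : y 7 ∈ T := by
      rw [← mul_div_cancel_left₀ (y 7) (hy0 1)]
      exact div_mem (hu 5) hy1
    have hy (j l n) (hl : y l ∈ T) (hj : y j / y l ^ n ∈ T) : y j ∈ T :=
      mem_of_div_mem (pow_ne_zero n (hy0 l)) hj (pow_mem hl n)
    have hy4 := mem_of_div_mem h17 (hu 6) (add_mem (pow_mem hy1 4) (pow_mem hy7 4))
    fin_cases j
    exacts [hu 4, hy1, hy 2 1 2 hy1 (hu 0), hy 3 1 3 hy1 (hu 2), hy4, hy 5 7 3 hy7 (hu 3),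
      hy 6 7 2 hy7 (hu 1), hy7]

end Octic

section OcticCycle

variable {K L I : Type} [Field K] [Field L] [Algebra K L] [Finite I] {g : Equiv.Perm I} {ζ : L}
  {τ : L ≃ₐ[K] L}

theorem isOcticSystem_lagrangeResolvent (hI : Nat.card I = 8) (hg : g.IsCycleOn Set.univ)
    (hζ : IsPrimitiveRoot ζ 8) {k : ℕ} (hτ : τ ζ = ζ ^ k) (i : I) :
    IsOcticSystem (permHom L I g : RFF L I →+* RFF L I) (coeffAct K L I τ : RFF L I →+* RFF L I) k
      (algebraMap L (RFF L I) ζ) (lagrangeResolvent ζ g i) where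
  pow_eq_one := by rw [← map_pow, hζ.pow_eq_one, map_one]
  ne_zero := lagrangeResolvent_ne_zero hg (hI ▸ hζ)
  cycle_apply j := by
    rw [← map_pow, ← Algebra.smul_def]
    exact permHom_lagrangeResolvent hg (hI ▸ hζ.pow_eq_one) j
  coeff_apply j := by
    rw [← hI]
    exact coeffAct_lagrangeResolvent (hI ▸ hζ.pow_eq_one) hτ j

theorem lagrangeResolvent_pow_add_pow_ne_zero (hg : g.IsCycleOn Set.univ)
    (hζ : IsPrimitiveRoot ζ (Nat.card I)) (i : I) {j l : Fin (Nat.card I)} (hjl : j ≠ l) {n : ℕ}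
    (hn : n ≠ 0) : lagrangeResolvent ζ g i j ^ n + lagrangeResolvent ζ g i l ^ n ≠ 0 := by
  intro h
  have hp := (map_eq_zero_iff _ (algebraicIndependent_lagrangeResolvent (i := i) hg hζ)).1
    (show MvPolynomial.aeval _ (MvPolynomial.X j ^ n + MvPolynomial.X l ^ n) = 0 by simpa using h)
  simpa [hjl, hn] using congrArg (MvPolynomial.eval (Pi.single j 1)) hp

theorem isRatExt_fixedSub_zpowers_of_isOcticGenerators [FiniteDimensional K L] [IsGalois K L]
    (hI : Nat.card I = 8) (hg : g.IsCycleOn Set.univ) (hζ : IsPrimitiveRoot ζ 8)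
    (hτ : ∀ σ, σ ∈ Submonoid.powers τ) {i : I} {u : Fin 8 → RFF L I}
    (hu : IsOcticGenerators L (permHom L I g : RFF L I →+* RFF L I)
      (coeffAct K L I τ : RFF L I →+* RFF L I) (lagrangeResolvent ζ g i) u) :
    IsRatExt K (fixedSub K I (Subgroup.zpowers g)) :=
  isRatExt_fixedSub_zpowers hg (hI.symm ▸ hζ) hτ
    (by rw [Cardinal.mk_fin, ← hI, Nat.cast_card]) hu.cycle_apply hu.coeff_mem_span
    (hI.symm ▸ hu.pow_mem) fun j hj ↦ hu.mem_adjoin ⟨j, hI ▸ hj⟩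

theorem isRatExt_fixedSub_zpowers_of_isCyclic [FiniteDimensional K L] [IsGalois K L]
    [IsCyclic (L ≃ₐ[K] L)] (hI : Nat.card I = 8) (hg : g.IsCycleOn Set.univ)
    (hζ : IsPrimitiveRoot ζ 8) : IsRatExt K (fixedSub K I (Subgroup.zpowers g)) := by
  obtain ⟨i⟩ : Nonempty I := (Nat.card_pos_iff.1 (by omega)).1
  obtain ⟨τ, hτ⟩ := IsCyclic.exists_monoid_generator (α := L ≃ₐ[K] L)
  obtain ⟨k, hk8, hk, hτζ⟩ := hζ.isPrimitiveRoot_iff.1 (hζ.map_of_injective τ.injective)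
  have hsys := isOcticSystem_lagrangeResolvent (τ := τ) hI hg hζ hτζ.symm i
  suffices h : ∃ u, IsOcticGenerators L (permHom L I g : RFF L I →+* RFF L I)
      (coeffAct K L I τ : RFF L I →+* RFF L I) (lagrangeResolvent ζ g i) u from
    isRatExt_fixedSub_zpowers_of_isOcticGenerators hI hg hζ hτ h.choose_spec
  have h8 : ((8 : ℕ) : L) ≠ 0 := hζ.neZero'.ne
  have h2 : (2 : L) ≠ 0 := fun h2 ↦ h8 (by push_cast; linear_combination 4 * h2)
  have h17 := lagrangeResolvent_pow_add_pow_ne_zero hg (hI.symm ▸ hζ) i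
    (j := ⟨1, by omega⟩) (l := ⟨7, by omega⟩) (by simp) four_ne_zero
  have hk' : k = 1 ∨ k = 3 ∨ k = 5 ∨ k = 7 := by
    interval_cases k <;> revert hk <;> decide
  obtain rfl | rfl | rfl | rfl := hk'
  exacts [hsys.exists_generators_one, hsys.exists_generators_three, hsys.exists_generators_five,
    hsys.exists_generators_seven h2 h17]

end OcticCycle

section UniqueFactorization

open UniqueFactorizationMonoid

variable {A : Type*} [CommMonoidWithZero A] [UniqueFactorizationMonoid A] [Subsingleton Aˣ]

theorem exists_factorization_eq_mapRange [Nontrivial A] [DecidableEq A] (b : A) {f : ℕ → ℕ}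
    (hf : f 0 = 0) : ∃ w : A, w ≠ 0 ∧ factorization w = (factorization b).mapRange f hf := by
  set m : Multiset A := Finsupp.toMultiset ((factorization b).mapRange f hf)
  have hm : m ⊆ normalizedFactors b := fun p hp ↦ by
    rw [Finsupp.mem_toMultiset] at hp
    have := Finsupp.support_mapRange hp
    rw [support_factorization] at this
    exact Multiset.mem_toFinset.1 this
  refine ⟨m.prod, prod_ne_zero_of_subset_normalizedFactors hm, ?_⟩
  rw [factorization, normalizedFactors_prod_eq_self_of_subset hm, Finsupp.toMultiset_toFinsupp]

theorem factorization_mulEquiv_apply [DecidableEq A] (e : A ≃* A) (x p : A) :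
    factorization (e x) (e p) = factorization x p := by
  obtain rfl | hx := eq_or_ne x 0
  · simp
  have hmap : normalizedFactors (e x) = (normalizedFactors x).map e := by
    conv_lhs => rw [← associated_iff_eq.1 (prod_normalizedFactors hx), map_multiset_prod]
    refine normalizedFactors_prod_of_prime fun p hp ↦ ?_
    obtain ⟨q, hq, rfl⟩ := Multiset.mem_map.1 hp
    exact (MulEquiv.prime_iff e).2 (prime_of_normalized_factor q hq)
  rw [factorization_eq_count, hmap, Multiset.count_map_eq_count' _ _ e.injective,
    factorization_eq_count]

theorem factorization_mulEquiv_apply_of_mul_pow_eq [DecidableEq A] {e : A ≃* A} {b x y : A}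
    {k m : ℕ} (hb : b ≠ 0) (hx : x ≠ 0) (hy : y ≠ 0) (h : e b * x ^ m = b ^ k * y ^ m) (p : A) :
    factorization b p + m * factorization x (e p) =
      k * factorization b (e p) + m * factorization y (e p) := by
  have : NoZeroDivisors A := inferInstance
  have hp := DFunLike.congr_fun (congrArg factorization h) (e p)
  rw [factorization_mul (by simpa) (pow_ne_zero m hx),
    factorization_mul (pow_ne_zero k hb) (pow_ne_zero m hy)] at hp
  simpa [factorization_pow, factorization_mulEquiv_apply] using hp

theorem exists_eq_mul_mulEquiv_mul_sq [Nontrivial A] {e₃ e₇ : A ≃* A} {b x₃ y₃ x₇ y₇ : A}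
    (hb : b ≠ 0) (hx₃ : x₃ ≠ 0) (hy₃ : y₃ ≠ 0) (hx₇ : x₇ ≠ 0) (hy₇ : y₇ ≠ 0)
    (h₃ : e₃ b * x₃ ^ 8 = b ^ 3 * y₃ ^ 8) (h₇ : e₇ b * x₇ ^ 8 = b ^ 7 * y₇ ^ 8) :
    ∃ w q : A, w * e₃ w * q ^ 2 = b ∧ e₇ w = w := by
  classical
  -- `w` collects the primes whose exponent in `b` is `±1` mod 8; `e₃` swaps them with those of
  -- exponent `±3`, and `e₇` permutes them.
  obtain ⟨w, hw0, hw⟩ := exists_factorization_eq_mapRange b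
    (f := fun n ↦ if n % 8 = 1 ∨ n % 8 = 7 then 1 else 0) rfl
  obtain ⟨q, hq0, hq⟩ := exists_factorization_eq_mapRange b (f := (· / 2)) rfl
  have he₃w : e₃ w ≠ 0 := by simpa
  refine ⟨w, q, associated_iff_eq.1 (associated_of_factorization_eq _ _ ?_ hb ?_),
    associated_iff_eq.1 (associated_of_factorization_eq _ _ (by simpa) hw0 ?_)⟩
  · exact mul_ne_zero (mul_ne_zero hw0 he₃w) (pow_ne_zero 2 hq0)
  · ext p
    obtain ⟨r, rfl⟩ := e₃.surjective p
    have hr : factorization b r % 8 = 1 ∨ factorization b r % 8 = 7 ↔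
        factorization b (e₃ r) % 8 = 3 ∨ factorization b (e₃ r) % 8 = 5 := by
      have := factorization_mulEquiv_apply_of_mul_pow_eq hb hx₃ hy₃ h₃ r
      omega
    rw [factorization_mul (mul_ne_zero hw0 he₃w) (pow_ne_zero 2 hq0), factorization_mul hw0 he₃w,
      factorization_pow]
    simp only [Finsupp.add_apply, Finsupp.smul_apply, smul_eq_mul, factorization_mulEquiv_apply,
      hw, hq, Finsupp.mapRange_apply, hr]
    split_ifs <;> omega
  · ext p
    obtain ⟨r, rfl⟩ := e₇.surjective p
    have := factorization_mulEquiv_apply_of_mul_pow_eq hb hx₇ hy₇ h₇ r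
    simp only [factorization_mulEquiv_apply, hw, Finsupp.mapRange_apply]
    split_ifs <;> omega

end UniqueFactorization

/-- The isomorphism of monoids of associate classes induced by `e`. -/
def associatesCongr {M N : Type*} [CommMonoid M] [CommMonoid N] (e : M ≃* N) :
    Associates M ≃* Associates N where
  __ := Quotient.congr e.toEquiv fun a b ↦
    ⟨Associated.map e, fun h ↦ show Associated a b by simpa using Associated.map e.symm h⟩
  map_mul' := by
    rintro ⟨a⟩ ⟨b⟩
    exact congrArg Associates.mk (map_mul e a b)

theorem associatesCongr_mk {M N : Type*} [CommMonoid M] [CommMonoid N] (e : M ≃* N) (a : M) :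
    associatesCongr e (.mk a) = .mk (e a) :=
  rfl

theorem exists_associated_mul_mulEquiv_mul_sq {S : Type*} [CommRing S] [IsDomain S]
    [UniqueFactorizationMonoid S] {e₃ e₇ : S ≃* S} {b x₃ y₃ x₇ y₇ : S} (hb : b ≠ 0)
    (hx₃ : x₃ ≠ 0) (hy₃ : y₃ ≠ 0) (hx₇ : x₇ ≠ 0) (hy₇ : y₇ ≠ 0)
    (h₃ : e₃ b * x₃ ^ 8 = b ^ 3 * y₃ ^ 8) (h₇ : e₇ b * x₇ ^ 8 = b ^ 7 * y₇ ^ 8) :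
    ∃ w q : S, Associated (w * e₃ w * q ^ 2) b ∧ Associated w (e₇ w) := by
  simp_rw [← Associates.mk_ne_zero (M := S)] at hb hx₃ hy₃ hx₇ hy₇
  obtain ⟨w, q, hwq, hw⟩ := exists_eq_mul_mulEquiv_mul_sq (e₃ := associatesCongr e₃)
    (e₇ := associatesCongr e₇) hb hx₃ hy₃ hx₇ hy₇
    (by simp only [associatesCongr_mk, ← Associates.mk_pow, Associates.mk_mul_mk, h₃])
    (by simp only [associatesCongr_mk, ← Associates.mk_pow, Associates.mk_mul_mk, h₇])
  obtain ⟨w, rfl⟩ := Associates.mk_surjective w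
  obtain ⟨q, rfl⟩ := Associates.mk_surjective q
  simp only [associatesCongr_mk, ← Associates.mk_pow, Associates.mk_mul_mk,
    Associates.mk_eq_mk_iff_associated] at hwq hw
  exact ⟨w, q, hwq, hw.symm⟩

section FractionField

variable {S F : Type*} [CommRing S] [IsDomain S] [Field F] [Algebra S F] [IsFractionRing S F]

theorem exists_mul_pow_eq_of_apply_eq {b c : F} (hc : c ≠ 0) {r d : S} (hd : d ≠ 0) {k m : ℕ}
    (hrd : b * algebraMap S F d ^ m = algebraMap S F r) {e : S ≃+* S} {α : F ≃+* F}
    (hα : ∀ s, α (algebraMap S F s) = algebraMap S F (e s)) (h : α b = b ^ k * c ^ m) :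
    ∃ x y : S, x ≠ 0 ∧ y ≠ 0 ∧ e r * x ^ m = r ^ k * y ^ m := by
  obtain ⟨u, v, hv, rfl⟩ := IsFractionRing.div_surjective (A := S) c
  have hv0 := nonZeroDivisors.ne_zero hv
  have hv0' : algebraMap S F v ≠ 0 := by simpa
  have hu0 : u ≠ 0 := by
    rintro rfl
    simp at hc
  refine ⟨d ^ k * v, u * e d, mul_ne_zero (pow_ne_zero k hd) hv0,
    mul_ne_zero hu0 (by simpa), IsFractionRing.injective S F ?_⟩
  simp only [map_mul, map_pow, ← hα, ← hrd, h, div_pow]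
  field_simp
  ring

variable (S) [UniqueFactorizationMonoid S]

theorem associated_den_apply {e : S ≃+* S} {α : F ≃+* F}
    (hα : ∀ s, α (algebraMap S F s) = algebraMap S F (e s)) (x : F) :
    Associated (IsFractionRing.den S (α x) : S) (e (IsFractionRing.den S x)) := by
  have hd : e (IsFractionRing.den S x) ∈ nonZeroDivisors S := by simp
  refine (IsFractionRing.num_den_unique S (α x) (e (IsFractionRing.num S x)) ⟨_, hd⟩ ?_ ?_).2
  · exact .of_map e.symm (by simpa using IsFractionRing.num_den_reduced S x)
  · rw [IsFractionRing.mk'_eq_div, ← hα, ← hα, ← map_div₀, IsFractionRing.mk'_num_den']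

theorem exists_units_mul_mul_apply_mul_sq_eq {e₃ e₇ : S ≃+* S} {α₃ α₇ : F ≃+* F}
    (hα₃ : ∀ s, α₃ (algebraMap S F s) = algebraMap S F (e₃ s))
    (hα₇ : ∀ s, α₇ (algebraMap S F s) = algebraMap S F (e₇ s)) {b c₃ c₇ : F} (hb : b ≠ 0)
    (hc₃ : c₃ ≠ 0) (hc₇ : c₇ ≠ 0) (h₃ : α₃ b = b ^ 3 * c₃ ^ 8) (h₇ : α₇ b = b ^ 7 * c₇ ^ 8) :
    ∃ (a v : Sˣ) (w q : F), algebraMap S F a * (w * α₃ w * q ^ 2) = b ∧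
      α₇ w = algebraMap S F v * w := by
  obtain ⟨r, d, hd, rfl⟩ := IsFractionRing.div_surjective (A := S) b
  have hd0 := nonZeroDivisors.ne_zero hd
  have hd0' : algebraMap S F d ≠ 0 := by simpa
  have hr0 : r ≠ 0 := by
    rintro rfl
    simp at hb
  have hrd : algebraMap S F r / algebraMap S F d * algebraMap S F d ^ 8 =
      algebraMap S F (r * d ^ 7) := by
    rw [map_mul, map_pow]
    field_simp
  obtain ⟨x₃, y₃, hx₃, hy₃, hxy₃⟩ := exists_mul_pow_eq_of_apply_eq hc₃ hd0 hrd hα₃ h₃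
  obtain ⟨x₇, y₇, hx₇, hy₇, hxy₇⟩ := exists_mul_pow_eq_of_apply_eq hc₇ hd0 hrd hα₇ h₇
  obtain ⟨w, q, ⟨a, ha⟩, v, hv⟩ := exists_associated_mul_mulEquiv_mul_sq
    (e₃ := e₃.toMulEquiv) (e₇ := e₇.toMulEquiv) (mul_ne_zero hr0 (pow_ne_zero 7 hd0)) hx₃ hy₃ hx₇
    hy₇ hxy₃ hxy₇
  refine ⟨a, v, algebraMap S F w, algebraMap S F q / algebraMap S F d ^ 4, ?_, ?_⟩
  · rw [eq_comm, ← mul_left_inj' (pow_ne_zero 8 hd0'), hrd, ← ha, hα₃]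
    simp only [map_mul, map_pow, RingEquiv.toMulEquiv_eq_coe, RingEquiv.coe_toMulEquiv]
    field_simp
  · rw [hα₇, ← map_mul, mul_comm, hv]
    rfl

end FractionField

theorem coeffAct_algebraMap_mapEquiv {K L I : Type} [Field K] [Field L] [Algebra K L]
    (τ : L ≃ₐ[K] L) (p : MvPolynomial I L) :
    (coeffAct K L I τ : RFF L I ≃+* RFF L I) (algebraMap _ (RFF L I) p) =
      algebraMap _ (RFF L I) (MvPolynomial.mapEquiv I (τ : L ≃+* L) p) :=
  coeffAct_algebraMap τ p

section Units

variable {L I : Type} [Field L]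

theorem exists_algebraMap_eq_units_algebraMap (a : (MvPolynomial I L)ˣ) :
    ∃ c : L, c ≠ 0 ∧ algebraMap L (RFF L I) c = algebraMap (MvPolynomial I L) (RFF L I) a := by
  obtain ⟨c, hc, h⟩ := MvPolynomial.isUnit_iff_eq_C_of_isReduced.1 a.isUnit
  exact ⟨c, hc.ne_zero, by
    rw [h, IsScalarTower.algebraMap_apply L (MvPolynomial I L), MvPolynomial.algebraMap_eq]⟩

theorem exists_algebraMap_eq_of_pow_eq {f : RFF L I} {c : L} (hc : c ≠ 0) {n : ℕ} (hn : n ≠ 0)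
    (h : f ^ n = algebraMap L (RFF L I) c) : ∃ b : L, b ≠ 0 ∧ algebraMap L (RFF L I) b = f := by
  rw [IsScalarTower.algebraMap_apply L (MvPolynomial I L)] at h
  obtain ⟨p, rfl⟩ := IsIntegrallyClosed.isIntegral_iff.1
    (.of_pow (Nat.pos_of_ne_zero hn) (h ▸ isIntegral_algebraMap) :
      IsIntegral (MvPolynomial I L) f)
  rw [← map_pow] at h
  have hp : IsUnit p := by
    rw [← isUnit_pow_iff hn, IsFractionRing.injective _ (RFF L I) h]
    exact hc.isUnit.map _
  exact exists_algebraMap_eq_units_algebraMap hp.unit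

theorem exists_smul_eq_of_associated {p q : MvPolynomial I L} (h : Associated p q) :
    ∃ c : L, c ≠ 0 ∧ algebraMap _ (RFF L I) q = c • algebraMap _ (RFF L I) p := by
  obtain ⟨a, rfl⟩ := h
  obtain ⟨c, hc, h⟩ := exists_algebraMap_eq_units_algebraMap a
  exact ⟨c, hc, by rw [map_mul, ← h, Algebra.smul_def, mul_comm]⟩

theorem exists_apply_algebraMap_den_eq {e : MvPolynomial I L ≃+* MvPolynomial I L}
    {α : RFF L I ≃+* RFF L I} (hα : ∀ p, α (algebraMap _ _ p) = algebraMap _ _ (e p))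
    {x y : RFF L I} {a : L} (ha : a ≠ 0) (h : α x = a • y) :
    ∃ c : L, c ≠ 0 ∧ α (algebraMap _ _ (IsFractionRing.den (MvPolynomial I L) x : MvPolynomial I L))
      = c • algebraMap _ _ (IsFractionRing.den (MvPolynomial I L) y : MvPolynomial I L) := by
  have hd := associated_den_apply _ hα x
  rw [h] at hd
  have hu : IsUnit (MvPolynomial.C a : MvPolynomial I L) := ha.isUnit.map _
  have hy := (IsFractionRing.num_den_unique (MvPolynomial I L) (a • y)
    (MvPolynomial.C a * IsFractionRing.num (MvPolynomial I L) y) (IsFractionRing.den _ y)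
    ((isRelPrime_mul_unit_left_left hu ..).2 (IsFractionRing.num_den_reduced _ y)) (by
      rw [IsFractionRing.mk'_eq_div, map_mul, mul_div_assoc, IsFractionRing.mk'_num_den',
        Algebra.smul_def, IsScalarTower.algebraMap_apply L (MvPolynomial I L),
        MvPolynomial.algebraMap_eq])).2
  rw [hα]
  exact exists_smul_eq_of_associated (hy.symm.trans hd)

end Units

theorem map_ne_neg_of_map_eq {L : Type*} [Field L] {ζ u : L} (hζ : IsPrimitiveRoot ζ 8)
    {τ₃ τ₇ : L →+* L} (hτ₃ : τ₃ ζ = ζ ^ 3) (hτ₇ : τ₇ ζ = ζ ^ 7) (hu : u ^ 8 = 1)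
    (hu₇ : τ₇ u = u) : τ₃ u ≠ -u := by
  intro hu₃
  obtain ⟨i, -, rfl⟩ := hζ.eq_pow_of_pow_eq_one hu
  have hζ4 : ζ ^ 4 = -1 := (hζ.pow (by norm_num) (by norm_num : 8 = 4 * 2)).eq_neg_one_of_two_right
  have h₃ : ζ ^ (3 * i) = ζ ^ (4 + i) := by
    rw [pow_mul, ← hτ₃, ← map_pow, hu₃, pow_add, hζ4, neg_one_mul]
  have h₇ : ζ ^ (7 * i) = ζ ^ i := by rw [pow_mul, ← hτ₇, ← map_pow, hu₇]
  rw [(hζ.isOfFinOrder (by norm_num)).pow_eq_pow_iff_modEq, ← hζ.eq_orderOf] at h₃ h₇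
  unfold Nat.ModEq at h₃ h₇
  omega

section OcticSystem

variable {E : Type*} [Field E] {σ τ : E →+* E} {k : ℕ} {z : E} {y : ℕ → E}

theorem IsOcticSystem.cycle_apply_pow_eight (h : IsOcticSystem σ τ k z y) (j : ℕ) :
    σ (y j ^ 8) = y j ^ 8 := by
  rw [map_pow, h.cycle_apply, mul_pow, ← pow_mul, mul_comm j, pow_mul, h.pow_eq_one, one_pow,
    one_mul]

theorem IsOcticSystem.cycle_apply_div_pow (h : IsOcticSystem σ τ k z y) (j : ℕ) :
    σ (y j / y 1 ^ j) = y j / y 1 ^ j := by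
  have hz : z ^ j ≠ 0 := pow_ne_zero j fun hz ↦ by simpa [hz] using h.pow_eq_one
  rw [map_div₀, map_pow, h.cycle_apply, h.cycle_apply, pow_one, mul_pow, mul_div_mul_left _ _ hz]

theorem IsOcticSystem.coeff_apply_pow_eight (h : IsOcticSystem σ τ k z y) (hk : k < 8) :
    τ (y 1 ^ 8) = (y 1 ^ 8) ^ k * (y k / y 1 ^ k) ^ 8 := by
  rw [map_pow, h.coeff_apply, mul_one, Nat.mod_eq_of_lt hk, div_pow, ← pow_mul, ← pow_mul,
    mul_comm k, mul_div_cancel₀ _ (pow_ne_zero _ (h.ne_zero 1))]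

end OcticSystem

section NonRational

variable {K L I : Type} [Field K] [Field L] [Algebra K L] {ζ : L} {g : Equiv.Perm I}
  {τ₃ τ₇ : L ≃ₐ[K] L}

theorem exists_denominator_semiinvariant {w : RFF L I} {a v : L} (ha : a ≠ 0) (hv : v ≠ 0)
    (hw : permHom L I g w = -w) (hw₃ : w * coeffAct K L I τ₃ w = algebraMap L _ a)
    (hw₇ : coeffAct K L I τ₇ w = v • w) :
    ∃ (D : RFF L I) (u b c : L), D ≠ 0 ∧ b ≠ 0 ∧ c ≠ 0 ∧ permHom L I g D = u • D ∧
      coeffAct K L I τ₇ D = b • D ∧ coeffAct K L I τ₃ D = c • (w * D) := by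
  have hw0 : w ≠ 0 := by
    rintro rfl
    exact (map_ne_zero (algebraMap L (RFF L I))).2 ha (by rw [← hw₃, zero_mul])
  obtain ⟨u, -, hu⟩ := exists_apply_algebraMap_den_eq
    (e := (MvPolynomial.renameEquiv L g).toRingEquiv)
    (α := (permHom L I g : RFF L I ≃+* RFF L I)) (permHom_algebraMap g)
    (a := -1) (by simp) (by simpa using hw)
  obtain ⟨b, hb0, hb⟩ := exists_apply_algebraMap_den_eq (coeffAct_algebraMap_mapEquiv τ₇) hv hw₇
  obtain ⟨c, hc0, hc⟩ := exists_apply_algebraMap_den_eq (coeffAct_algebraMap_mapEquiv τ₃) ha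
    (x := w) (y := w⁻¹) (by rw [Algebra.smul_def, ← hw₃]; field_simp; rfl)
  obtain ⟨d, hd0, hd⟩ := exists_smul_eq_of_associated
    (IsFractionRing.associated_num_den_inv (A := MvPolynomial I L) w hw0)
  refine ⟨_, u, b, c * d, by simp, hb0, mul_ne_zero hc0 hd0, hu, hb, hc.trans ?_⟩
  rw [hd, smul_smul, IsFractionRing.num_mul_den_eq_num_iff_eq.2 rfl]

theorem coeffAct_ne_smul_of_permHom_eq_neg (hζ : IsPrimitiveRoot ζ 8) (hg : g ^ 8 = 1)
    (hτ₃ : τ₃ ζ = ζ ^ 3) (hτ₇ : τ₇ ζ = ζ ^ 7) {w : RFF L I} {a v : L} (ha : a ≠ 0) (hv : v ≠ 0)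
    (hw : permHom L I g w = -w) (hw₃ : w * coeffAct K L I τ₃ w = algebraMap L _ a) :
    coeffAct K L I τ₇ w ≠ v • w := by
  intro hw₇
  obtain ⟨D, u, b, c, hD0, hb0, hc0, hu, hb, hc⟩ :=
    exists_denominator_semiinvariant ha hv hw hw₃ hw₇
  have hw0 : w ≠ 0 := by
    rintro rfl
    exact (map_ne_zero (algebraMap L (RFF L I))).2 ha (by rw [← hw₃, zero_mul])
  have hu8 : u ^ 8 = 1 :=
    pow_eq_one_of_apply_eq_smul hD0 hu (by rw [← map_pow, hg, map_one])
  have hu₇ : τ₇ u = u := by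
    have h := coeffAct_permHom τ₇ g D
    rw [hu, hb, coeffAct_smul, hb, map_smul, hu, smul_comm] at h
    exact smul_left_injective L hD0 (smul_right_injective _ hb0 h)
  have hu₃ : τ₃ u = -u := by
    have h := coeffAct_permHom τ₃ g D
    rw [hu, hc, coeffAct_smul, hc, map_smul, map_mul, hw, hu, smul_comm, neg_mul, mul_smul_comm,
      ← neg_smul] at h
    exact smul_left_injective L (mul_ne_zero hw0 hD0) (smul_right_injective _ hc0 h)
  exact map_ne_neg_of_map_eq (τ₃ := (τ₃ : L →+* L)) (τ₇ := (τ₇ : L →+* L)) hζ hτ₃ hτ₇ hu8 hu₇ hu₃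

theorem exists_smul_mul_coeffAct_mul_sq_eq {ι : Type} {t : ι → RFF L I}
    (htτ : ∀ (τ : L ≃ₐ[K] L) i, coeffAct K L I τ (t i) = t i) (ht : AlgebraicIndependent L t)
    {b c₃ c₇ : RFF L I} (hb : b ∈ adjoin L (Set.range t)) (hc₃ : c₃ ∈ adjoin L (Set.range t))
    (hc₇ : c₇ ∈ adjoin L (Set.range t)) (hb0 : b ≠ 0) (hc₃0 : c₃ ≠ 0) (hc₇0 : c₇ ≠ 0)
    (h₃ : coeffAct K L I τ₃ b = b ^ 3 * c₃ ^ 8) (h₇ : coeffAct K L I τ₇ b = b ^ 7 * c₇ ^ 8) :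
    ∃ (a v : L) (w q : RFF L I), a ≠ 0 ∧ v ≠ 0 ∧ w ∈ adjoin L (Set.range t) ∧
      q ∈ adjoin L (Set.range t) ∧ a • (w * coeffAct K L I τ₃ w * q ^ 2) = b ∧
      coeffAct K L I τ₇ w = v • w := by
  simp_rw [← fieldRange_substHom ht] at *
  obtain ⟨b, rfl⟩ := hb
  obtain ⟨c₃, rfl⟩ := hc₃
  obtain ⟨c₇, rfl⟩ := hc₇
  have hsubst (τ : L ≃ₐ[K] L) (f : RFF L ι) :
      coeffAct K L I τ (substHom ht f) = substHom ht (coeffAct K L ι τ f) := by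
    obtain ⟨p, q, -, rfl⟩ := IsFractionRing.div_surjective (A := MvPolynomial ι L) f
    simp only [map_div₀, substHom_algebraMap, coeffAct_algebraMap, coeffAct_aeval (htτ τ)]
  obtain ⟨a, v, w, q, hwq, hw⟩ := exists_units_mul_mul_apply_mul_sq_eq
    (MvPolynomial ι L) (coeffAct_algebraMap_mapEquiv τ₃) (coeffAct_algebraMap_mapEquiv τ₇)
    (b := b) (c₃ := c₃) (c₇ := c₇) (by rintro rfl; simp at hb0) (by rintro rfl; simp at hc₃0)
    (by rintro rfl; simp at hc₇0) ((substHom ht).injective (by simpa [← hsubst] using h₃))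
    ((substHom ht).injective (by simpa [← hsubst] using h₇))
  obtain ⟨a', ha0, ha⟩ := exists_algebraMap_eq_units_algebraMap a
  obtain ⟨v', hv0, hv⟩ := exists_algebraMap_eq_units_algebraMap v
  refine ⟨a', v', substHom ht w, substHom ht q, ha0, hv0, ⟨w, rfl⟩, ⟨q, rfl⟩,
    ?_, ?_⟩
  · change a' • (_ * _) = substHom ht b
    rw [← hwq, hsubst, ← ha, ← Algebra.smul_def, map_smul]
    simp
  · rw [hsubst, ← map_smul (substHom ht), Algebra.smul_def, hv, ← hw]
    rfl

theorem exists_eq_smul_of_sq_eq_smul {f z : RFF L I} {c : L} (hz : z ≠ 0) (hc : c ≠ 0)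
    (h : f ^ 2 = c • z ^ 2) : ∃ b : L, b ≠ 0 ∧ f = b • z := by
  obtain ⟨b, hb, hfz⟩ := exists_algebraMap_eq_of_pow_eq (f := f / z) hc two_ne_zero
    (by rw [div_pow, h, Algebra.smul_def, mul_div_cancel_right₀ _ (pow_ne_zero 2 hz)])
  exact ⟨b, hb, by rw [Algebra.smul_def, hfz, div_mul_cancel₀ _ hz]⟩

theorem smul_mul_coeffAct_ne_sq (hζ : IsPrimitiveRoot ζ 8) (hg : g ^ 8 = 1) (hτ₃ : τ₃ ζ = ζ ^ 3)
    (hτ₇ : τ₇ ζ = ζ ^ 7) (hsq : τ₃ * τ₃ = 1) (hcomm : Commute τ₇ τ₃) {w z : RFF L I} {a v : L}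
    (ha : a ≠ 0) (hv : v ≠ 0) (hz0 : z ≠ 0) (hw : permHom L I g w = w)
    (hz : permHom L I g z = -z) (hw₇ : coeffAct K L I τ₇ w = v • w) :
    a • (w * coeffAct K L I τ₃ w) ≠ z ^ 2 := by
  intro h
  have h33 : coeffAct K L I τ₃ (coeffAct K L I τ₃ w) = w := by
    rw [← AlgEquiv.mul_apply, ← map_mul, hsq, map_one, AlgEquiv.one_apply]
  have h73 : coeffAct K L I τ₇ (coeffAct K L I τ₃ w) = τ₃ v • coeffAct K L I τ₃ w := by
    rw [← AlgEquiv.mul_apply, ← map_mul, hcomm.eq, map_mul, AlgEquiv.mul_apply, hw₇, coeffAct_smul]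
  obtain ⟨c, hc, hz₃⟩ : ∃ c : L, c ≠ 0 ∧ coeffAct K L I τ₃ z = c • z := by
    refine exists_eq_smul_of_sq_eq_smul (c := τ₃ a * a⁻¹) hz0 (by simpa) ?_
    rw [← map_pow, ← h, coeffAct_smul, map_mul, h33, smul_smul, inv_mul_cancel_right₀ ha, mul_comm]
  obtain ⟨d, hd, hz₇⟩ : ∃ d : L, d ≠ 0 ∧ coeffAct K L I τ₇ z = d • z := by
    refine exists_eq_smul_of_sq_eq_smul (c := τ₇ a * v * τ₃ v * a⁻¹) hz0 (by simpa [hv]) ?_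
    rw [← map_pow, ← h, coeffAct_smul, map_mul, h73, hw₇, smul_smul, inv_mul_cancel_right₀ ha,
      smul_mul_smul_comm, smul_smul, mul_assoc]
  refine coeffAct_ne_smul_of_permHom_eq_neg hζ hg hτ₃ hτ₇ (w := w / z) (a := (a * c)⁻¹)
    (v := v / d) (by simp [ha, hc]) (by simp [hv, hd]) (by rw [map_div₀, hw, hz, div_neg]) ?_ ?_
  · rw [map_div₀, hz₃, div_mul_div_comm, map_inv₀, map_mul, ← one_div, div_eq_div_iff]
    · simp only [Algebra.smul_def] at h ⊢
      linear_combination (algebraMap L (RFF L I) c) * h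
    · simp [hz0, hc]
    · simp [ha, hc]
  · rw [map_div₀, hw₇, hz₇]
    simp only [Algebra.smul_def, map_div₀]
    rw [mul_div_mul_comm]

theorem not_isRatExt_fixedSub_zpowers [FiniteDimensional K L] [IsGalois K L] [Finite I]
    (hI : Nat.card I = 8) (hg : g.IsCycleOn Set.univ) (hζ : IsPrimitiveRoot ζ 8)
    (hτ₃ : τ₃ ζ = ζ ^ 3) (hτ₇ : τ₇ ζ = ζ ^ 7) (hsq : τ₃ * τ₃ = 1) (hcomm : Commute τ₇ τ₃) :
    ¬ IsRatExt K (fixedSub K I (Subgroup.zpowers g)) := by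
  intro h
  obtain ⟨n, t, htτ, ht, htop⟩ := (isRatExt_fixedSub_iff_exists_coeffAct_eq (L := L)).1 h
  obtain ⟨i⟩ : Nonempty I := (Nat.card_pos_iff.1 (by omega)).1
  set y := lagrangeResolvent ζ g i
  have hsys₃ := isOcticSystem_lagrangeResolvent hI hg hζ hτ₃ i
  have hsys₇ := isOcticSystem_lagrangeResolvent hI hg hζ hτ₇ i
  have hy0 : ∀ j, y j ≠ 0 := hsys₃.ne_zero
  have hmem (f : RFF L I) : f ∈ adjoin L (Set.range t) ↔ permHom L I g f = f := by
    rw [htop, mem_fixedSub_zpowers]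
  obtain ⟨a, v, w, q, ha, hv, hw, hq, hwq, hw₇⟩ :=
    exists_smul_mul_coeffAct_mul_sq_eq (τ₃ := τ₃) (τ₇ := τ₇) htτ ht
      (b := y 1 ^ 8) (c₃ := y 3 / y 1 ^ 3) (c₇ := y 7 / y 1 ^ 7)
      ((hmem _).2 (hsys₃.cycle_apply_pow_eight 1)) ((hmem _).2 (hsys₃.cycle_apply_div_pow 3))
      ((hmem _).2 (hsys₃.cycle_apply_div_pow 7)) (pow_ne_zero 8 (hy0 1))
      (div_ne_zero (hy0 3) (pow_ne_zero 3 (hy0 1))) (div_ne_zero (hy0 7) (pow_ne_zero 7 (hy0 1)))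
      (hsys₃.coeff_apply_pow_eight (by norm_num)) (hsys₇.coeff_apply_pow_eight (by norm_num))
  have hq0 : q ≠ 0 := by
    rintro rfl
    simpa using hwq.trans_ne (pow_ne_zero 8 (hy0 1))
  have hy4 : permHom L I g (y 1 ^ 4) = -y 1 ^ 4 := by
    rw [map_pow, permHom_lagrangeResolvent hg (hI ▸ hζ.pow_eq_one), smul_pow, pow_one,
      (hζ.pow (by norm_num) (by norm_num : 8 = 4 * 2)).eq_neg_one_of_two_right, neg_one_smul]
  refine smul_mul_coeffAct_ne_sq (z := y 1 ^ 4 / q) hζ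
    (hI ▸ pow_natCard_eq_one_of_isCycleOn_univ hg) hτ₃ hτ₇ hsq hcomm ha hv
    (div_ne_zero (pow_ne_zero 4 (hy0 1)) hq0) ((hmem w).1 hw) ?_ hw₇ ?_
  · rw [map_div₀, hy4, (hmem q).1 hq, neg_div]
  · rw [div_pow, eq_div_iff (pow_ne_zero 2 hq0), smul_mul_assoc, hwq, ← pow_mul]

end NonRational

theorem surjective_of_injective_of_not_isCyclic {G H : Type*} [Group G] [Group H] {p : ℕ}
    [Fact p.Prime] (hH : Nat.card H = p ^ 2) (hG : ¬ IsCyclic G) {f : G →* H}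
    (hf : Function.Injective f) : Function.Surjective f := by
  have hp : p.Prime := Fact.out
  have : Finite H := (Nat.card_pos_iff.1 (hH ▸ pow_pos hp.pos 2)).2
  refine MonoidHom.range_eq_top.1 (f.range.eq_top_of_card_eq ?_)
  obtain ⟨m, hm, hcard⟩ := (Nat.dvd_prime_pow hp).1 (hH ▸ f.range.card_subgroup_dvd_card)
  obtain rfl : m = 2 := by
    by_contra hm2
    have : IsCyclic f.range := isCyclic_of_card_dvd_prime (p := p)
      (hcard ▸ (pow_dvd_pow p (by omega : m ≤ 1)).trans (pow_one p).dvd)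
    exact hG (isCyclic_of_injective f.rangeRestrict (MonoidHom.rangeRestrict_injective_iff.2 hf))
  rw [hcard, hH]

theorem isRatExt_fixedSub_zpowers_iff_isCyclic {K L I : Type} [Field K] [Field L] [Algebra K L]
    [IsCyclotomicExtension {8} K L] (hI : Nat.card I = 8) {g : Equiv.Perm I}
    (hg : g.IsCycleOn Set.univ) :
    IsRatExt K (fixedSub K I (Subgroup.zpowers g)) ↔ IsCyclic (L ≃ₐ[K] L) := by
  have : Finite I := (Nat.card_pos_iff.1 (by omega)).2
  have : FiniteDimensional K L := IsCyclotomicExtension.finiteDimensional {8} K L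
  have : IsGalois K L := IsCyclotomicExtension.isGalois {8} K L
  obtain ⟨ζ, hζ⟩ := IsCyclotomicExtension.exists_isPrimitiveRoot (S := {8}) K L rfl (by norm_num)
  refine ⟨fun h ↦ ?_, fun _ ↦ isRatExt_fixedSub_zpowers_of_isCyclic hI hg hζ⟩
  by_contra hcyc
  have hinj := hζ.autToPow_injective K
  have hcard : Nat.card (ZMod 8)ˣ = 2 ^ 2 := by
    rw [Nat.card_eq_fintype_card]
    decide
  have hsurj := surjective_of_injective_of_not_isCyclic hcard hcyc hinj
  obtain ⟨τ₃, hτ₃⟩ := hsurj ⟨3, 3, by decide, by decide⟩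
  obtain ⟨τ₇, hτ₇⟩ := hsurj ⟨7, 7, by decide, by decide⟩
  refine not_isRatExt_fixedSub_zpowers (τ₃ := τ₃) (τ₇ := τ₇) hI hg hζ ?_ ?_ (hinj ?_)
    (hinj ?_) h
  · rw [← hζ.autToPow_spec K, hτ₃]
    rfl
  · rw [← hζ.autToPow_spec K, hτ₇]
    rfl
  · rw [map_mul, hτ₃, map_one]
    decide
  · rw [map_mul, map_mul, mul_comm]

theorem exists_isPrimitiveRoot_eight {K : Type*} [Field K] [IsSepClosed K] (h2 : (2 : K) ≠ 0) :
    ∃ ζ : K, IsPrimitiveRoot ζ 8 := by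
  have : NeZero ((8 : ℕ) : K) := ⟨by
    rw [show (8 : ℕ) = 2 ^ 3 by norm_num]
    exact_mod_cast pow_ne_zero 3 h2⟩
  exact HasEnoughRootsOfUnity.exists_primitiveRoot K 8

theorem isCycleOn_univ_finRotate (n : ℕ) : (finRotate (n + 2)).IsCycleOn Set.univ := by
  have hsupp : {i | finRotate (n + 2) i ≠ i} = Set.univ :=
    Set.eq_univ_of_forall fun i ↦ by simp
  exact hsupp ▸ isCycle_finRotate.isCycleOn

theorem rationality_C8_iff_general (K : Type) [Field K] {I : Type} (hI : Nat.card I = 8)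
    {g : Equiv.Perm I} (hg : g.IsCycleOn Set.univ) :
    IsRatExt K (fixedSub K I (Subgroup.zpowers g)) ↔
      (ringChar K = 2 ∨ (ringChar K ≠ 2 ∧ ∀ ζ : AlgebraicClosure K, IsPrimitiveRoot ζ 8 →
        IsCyclic (K⟮ζ⟯ ≃ₐ[K] K⟮ζ⟯))) := by
  have : Finite I := (Nat.card_pos_iff.1 (by omega)).2
  have hiff {ζ : AlgebraicClosure K} (hζ : IsPrimitiveRoot ζ 8) :
      IsRatExt K (fixedSub K I (Subgroup.zpowers g)) ↔ IsCyclic (K⟮ζ⟯ ≃ₐ[K] K⟮ζ⟯) :=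
    have := hζ.intermediateField_adjoin_isCyclotomicExtension K
    isRatExt_fixedSub_zpowers_iff_isCyclic hI hg
  by_cases h2 : ringChar K = 2
  · have : CharP K 2 := ringChar.of_eq h2
    simpa [h2] using isRatExt_fixedSub_zpowers_of_charP (p := 2) (k := 3) hg hI
  · obtain ⟨ζ, hζ⟩ := exists_isPrimitiveRoot_eight (K := AlgebraicClosure K)
      (map_ofNat (algebraMap K (AlgebraicClosure K)) 2 ▸
        (map_ne_zero _).2 (Ring.two_ne_zero h2))
    simpa [h2] using ⟨fun h ζ hζ ↦ (hiff hζ).1 h, fun h ↦ (hiff hζ).2 (h ζ hζ)⟩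

/-- **Rationality criterion for the cyclic group `C₈`.** Let `K` be any field and let
`G = ⟨(1,2,3,4,5,6,7,8)⟩ ⊆ S₈` be the cyclic group of order 8 generated by an 8-cycle
(here `finRotate 8` on `{0,…,7}`). Then `K(x₁,…,x₈)^G` is `K`-rational if and only if
`char K = 2`, or `char K ≠ 2` and the Galois group `Gal(K(ζ₈)/K)` is cyclic, where `ζ₈` is a
primitive 8th root of unity in an algebraic closure of `K`. -/
theorem rationality_C8_iff (K : Type) [Field K] :
    IsRatExt K ↥(fixedSub K (Fin 8) (Subgroup.zpowers (finRotate 8))) ↔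
      (ringChar K = 2 ∨
        (ringChar K ≠ 2 ∧ ∀ ζ : AlgebraicClosure K, IsPrimitiveRoot ζ 8 →
          IsCyclic (↥(IntermediateField.adjoin K ({ζ} : Set (AlgebraicClosure K))) ≃ₐ[K]
            ↥(IntermediateField.adjoin K ({ζ} : Set (AlgebraicClosure K)))))) :=
  rationality_C8_iff_general K (by simp) (isCycleOn_univ_finRotate 6)
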